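/- arXiv:2005.07906 — 9 statements merged into one kernel-verified Lean document; each statement's English description precedes it below -/
import Mathlib

section
/- The complete graph K_n admits a tripartite 2-partition if and only if n ≤ 5. -/
/-- The edge set of the complete tripartite subgraph of the complete graph on `V`
determined by the three pairwise disjoint parts `A`, `B`, `C`:
all unordered pairs of vertices lying in two distinct parts. -/
def triEdges {V : Type*} (A B C : Set V) : Set (Sym2 V) :=
  {e | ∃ u v : V, e = s(u, v) ∧
    ((u ∈ A ∧ v ∈ B) ∨ (u ∈ A ∧ v ∈ C) ∨ (u ∈ B ∧ v ∈ C))}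

/-- The complete graph `K_n` admits a tripartite 2-partition: its edge set is the
disjoint union of the edge sets of two complete tripartite subgraphs. -/
def HasTripartite2Partition (n : ℕ) : Prop :=
  ∃ A₁ B₁ C₁ A₂ B₂ C₂ : Set (Fin n),
    Disjoint A₁ B₁ ∧ Disjoint A₁ C₁ ∧ Disjoint B₁ C₁ ∧
    Disjoint A₂ B₂ ∧ Disjoint A₂ C₂ ∧ Disjoint B₂ C₂ ∧
    (⊤ : SimpleGraph (Fin n)).edgeSet = triEdges A₁ B₁ C₁ ∪ triEdges A₂ B₂ C₂ ∧
    Disjoint (triEdges A₁ B₁ C₁) (triEdges A₂ B₂ C₂)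

/-!
Suppose a complete `α`-partite and a complete `β`-partite subgraph partition the edges of the
complete graph on `V`. A vertex outside the first and a different vertex outside the second would
span an uncovered edge, as would a vertex outside both and any other vertex. So one of the two, say
the `β`-partite one, is spanning, and the other is the disjoint union of the cliques on its parts.
Since two edges of a complete multipartite graph always lie in the same component, only one of these
parts has more than one vertex. That part is a clique of an `α`-partite graph, so it has at most
`|α|` vertices, and `|V| ≤ |α| + (|β| - 1)`. Conversely, `α ⊕ {j₀}ᶜ` carries such a partition for
each `j₀ : β`: the `β`-partite graph has the part `α` at `j₀` and singletons elsewhere.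
-/

open Cardinal Function Set

universe u

theorem exists_eq_some_comp {V ι : Type*} {f : V → Option ι} (hf : ∀ v, f v ≠ none) :
    ∃ f' : V → ι, f = some ∘ f' := by
  choose f' hf' using fun v ↦ Option.ne_none_iff_exists'.mp (hf v)
  exact ⟨f', funext hf'⟩

theorem exists_preimage_some_eq {V ι : Type*} {P : ι → Set V}
    (hP : Pairwise (Disjoint on P)) : ∃ f : V → Option ι, ∀ i, f ⁻¹' {some i} = P i := by
  classical
  refine ⟨fun v ↦ if h : ∃ i, v ∈ P i then some h.choose else none, fun i ↦ ?_⟩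
  ext v
  by_cases h : ∃ i, v ∈ P i
  · have hv : v ∈ P i ↔ h.choose = i :=
      ⟨fun hi ↦ hP.eq (not_disjoint_iff.mpr ⟨v, h.choose_spec, hi⟩), fun hi ↦ hi ▸ h.choose_spec⟩
    simp [h, hv]
  · simp [h, not_exists.mp h i]

theorem isCompl_iff_edgeSet_top_eq_and_disjoint {V : Type*} {G H : SimpleGraph V} :
    IsCompl G H ↔ (⊤ : SimpleGraph V).edgeSet = G.edgeSet ∪ H.edgeSet ∧
      Disjoint G.edgeSet H.edgeSet := by
  rw [isCompl_iff, codisjoint_iff, ← SimpleGraph.edgeSet_sup, SimpleGraph.edgeSet_inj,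
    SimpleGraph.disjoint_edgeSet, eq_comm, and_comm]

/-- The complete multipartite subgraph of the complete graph on `V` with parts `f ⁻¹' {some i}`.
Vertices with value `none` lie outside all parts; parts may be empty. Giving the parts by a function
makes them disjoint automatically. -/
def multipartiteGraph {V ι : Type*} (f : V → Option ι) : SimpleGraph V where
  Adj u v := f u ≠ none ∧ f v ≠ none ∧ f u ≠ f v
  symm := ⟨fun _ _ ⟨hu, hv, huv⟩ ↦ ⟨hv, hu, huv.symm⟩⟩
  loopless := ⟨fun _ ⟨_, _, h⟩ ↦ h rfl⟩

namespace multipartiteGraph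

theorem adj_iff {V ι : Type*} {f : V → Option ι} {u v : V} :
    (multipartiteGraph f).Adj u v ↔ f u ≠ none ∧ f v ≠ none ∧ f u ≠ f v :=
  Iff.rfl

theorem some_comp_adj_iff {V ι : Type*} {f : V → ι} {u v : V} :
    (multipartiteGraph (some ∘ f)).Adj u v ↔ f u ≠ f v := by
  simp [adj_iff]

section

variable {V α β : Type*} {f : V → Option α}

theorem forall_ne_none_or_of_isCompl [Nontrivial V] {g : V → Option β}
    (h : IsCompl (multipartiteGraph f) (multipartiteGraph g)) :
    (∀ v, f v ≠ none) ∨ ∀ v, g v ≠ none := by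
  have adj_or {u v : V} (huv : u ≠ v) :
      (multipartiteGraph f).Adj u v ∨ (multipartiteGraph g).Adj u v := by
    rwa [← SimpleGraph.sup_adj, h.sup_eq_top]
  by_contra! ⟨⟨u, hu⟩, v, hv⟩
  obtain rfl | huv := eq_or_ne u v
  · obtain ⟨w, hw⟩ := exists_ne u
    exact (adj_or hw).elim (fun hf ↦ hf.2.1 hu) (fun hg ↦ hg.2.1 hv)
  · exact (adj_or huv).elim (fun hf ↦ hf.1 hu) (fun hg ↦ hg.2.1 hv)

variable {g : V → β} (h : IsCompl (multipartiteGraph f) (multipartiteGraph (some ∘ g)))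
include h

theorem adj_iff_of_isCompl {u v : V} :
    (multipartiteGraph f).Adj u v ↔ u ≠ v ∧ g u = g v := by
  rw [← h.symm.compl_eq, SimpleGraph.compl_adj, some_comp_adj_iff, not_not]

theorem apply_eq_apply_of_nontrivial_fibres {u v x y : V} (huv : u ≠ v)
    (hguv : g u = g v) (hxy : x ≠ y) (hgxy : g x = g y) : g u = g x := by
  obtain ⟨hfu, -, -⟩ := (adj_iff_of_isCompl h).mpr ⟨huv, hguv⟩
  obtain ⟨hfx, hfy, hfxy⟩ := (adj_iff_of_isCompl h).mpr ⟨hxy, hgxy⟩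
  -- `f u` cannot equal both `f x` and `f y`, so `u` is adjacent to `x` or to `y`.
  by_cases hux : f u = f x
  · exact ((adj_iff_of_isCompl h).mp ⟨hfu, hfy, hux ▸ hfxy⟩).2.trans hgxy.symm
  · exact ((adj_iff_of_isCompl h).mp ⟨hfu, hfx, hux⟩).2

end

section

variable {V α β : Type u} {f : V → Option α} {g : V → β}
  (h : IsCompl (multipartiteGraph f) (multipartiteGraph (some ∘ g)))
include h

theorem cardinalMk_fibre_le {x y : V} (hxy : x ≠ y) (hgxy : g x = g y) :
    #(g ⁻¹' {g x}) ≤ #α := by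
  have f_injOn : InjOn f (g ⁻¹' {g x}) := fun a ha b hb hfab ↦ by
    by_contra hab
    exact ((adj_iff_of_isCompl h).mpr ⟨hab, ha.trans hb.symm⟩).2.2 hfab
  have image_subset : f '' (g ⁻¹' {g x}) ⊆ range some := by
    rintro _ ⟨a, ha, rfl⟩
    obtain rfl | hax := eq_or_ne a x
    · exact Option.ne_none_iff_exists.mp ((adj_iff_of_isCompl h).mpr ⟨hxy, hgxy⟩).1
    · exact Option.ne_none_iff_exists.mp ((adj_iff_of_isCompl h).mpr ⟨hax, ha⟩).1
  calc #(g ⁻¹' {g x}) = #(f '' (g ⁻¹' {g x})) := (mk_image_eq_of_injOn _ _ f_injOn).symm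
    _ ≤ #(range (some : α → Option α)) := mk_le_mk_of_subset image_subset
    _ = #α := mk_range_eq _ (Option.some_injective α)

theorem cardinalMk_compl_fibre_le {x y : V} (hxy : x ≠ y) (hgxy : g x = g y) :
    #↥(g ⁻¹' {g x})ᶜ ≤ #↥({g x}ᶜ : Set β) := by
  have g_injOn : InjOn g (g ⁻¹' {g x})ᶜ := fun a ha b _ hgab ↦ by
    by_contra hab
    exact ha (apply_eq_apply_of_nontrivial_fibres h hab hgab hxy hgxy)
  rw [← mk_image_eq_of_injOn _ _ g_injOn]
  exact mk_le_mk_of_subset (image_subset_iff.mpr subset_rfl)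

theorem cardinalMk_add_one_le_of_isCompl_some_comp [Nonempty α] : #V + 1 ≤ #α + #β := by
  by_cases g_inj : Injective g
  · rw [add_comm #V]
    exact add_le_add (Cardinal.one_le_iff_ne_zero.mpr (mk_ne_zero α)) (mk_le_of_injective g_inj)
  · obtain ⟨x, y, hgxy, hxy⟩ := not_injective_iff.mp g_inj
    calc #V + 1 = #(g ⁻¹' {g x}) + #↥(g ⁻¹' {g x})ᶜ + 1 := by rw [mk_sum_compl]
      _ ≤ #α + #↥({g x}ᶜ : Set β) + 1 := by
        gcongr
        · exact cardinalMk_fibre_le h hxy hgxy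
        · exact cardinalMk_compl_fibre_le h hxy hgxy
      _ = #α + #β := by
        rw [add_assoc, add_comm _ 1, ← mk_singleton (g x), mk_sum_compl]

end

theorem cardinalMk_add_one_le_of_isCompl {V α β : Type u} [Nonempty α] [Nonempty β]
    {f : V → Option α} {g : V → Option β}
    (h : IsCompl (multipartiteGraph f) (multipartiteGraph g)) : #V + 1 ≤ #α + #β := by
  obtain _ | _ := subsingleton_or_nontrivial V
  · exact add_le_add
      ((le_one_iff_subsingleton.mpr ‹_›).trans (Cardinal.one_le_iff_ne_zero.mpr (mk_ne_zero α)))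
      (Cardinal.one_le_iff_ne_zero.mpr (mk_ne_zero β))
  obtain hf | hg := forall_ne_none_or_of_isCompl h
  · obtain ⟨f', rfl⟩ := exists_eq_some_comp hf
    exact (cardinalMk_add_one_le_of_isCompl_some_comp h.symm).trans_eq (add_comm _ _)
  · obtain ⟨g', rfl⟩ := exists_eq_some_comp hg
    exact cardinalMk_add_one_le_of_isCompl_some_comp h

theorem isCompl_of_embedding {V α β : Type*} {j₀ : β} (e : V ↪ α ⊕ ({j₀}ᶜ : Set β)) :
    IsCompl (multipartiteGraph fun v ↦ (e v).getLeft?)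
      (multipartiteGraph (some ∘ fun v ↦ (e v).elim (fun _ ↦ j₀) Subtype.val)) := by
  rw [← compl_eq_iff_isCompl]
  ext u v
  rw [SimpleGraph.compl_adj, adj_iff, some_comp_adj_iff, ← e.injective.ne_iff]
  have ne_j₀ (j : ({j₀}ᶜ : Set β)) : (j : β) ≠ j₀ := j.2
  rcases e u with a | j <;> rcases e v with b | k <;> simp [ne_j₀, (ne_j₀ _).symm, Subtype.ext_iff]

end multipartiteGraph

theorem completeGraph_hasTripartite2Partition_iff_general {V α β : Type u} [Nonempty α]
    [Nonempty β] :
    (∃ (f : V → Option α) (g : V → Option β),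
      IsCompl (multipartiteGraph f) (multipartiteGraph g)) ↔ #V + 1 ≤ #α + #β := by
  refine ⟨fun ⟨_, _, h⟩ ↦ multipartiteGraph.cardinalMk_add_one_le_of_isCompl h, fun hV ↦ ?_⟩
  obtain ⟨j₀⟩ := ‹Nonempty β›
  rw [← mk_sum_compl ({j₀} : Set β), mk_singleton, add_comm 1, ← add_assoc,
    add_one_le_add_one_iff] at hV
  obtain ⟨e⟩ : Nonempty (V ↪ α ⊕ ({j₀}ᶜ : Set β)) := by
    rwa [← Cardinal.le_def, mk_sum, lift_id, lift_id]
  exact ⟨_, _, multipartiteGraph.isCompl_of_embedding e⟩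

theorem mk_mem_triEdges {V : Type*} {A B C : Set V} {u v : V} :
    s(u, v) ∈ triEdges A B C ↔
      (u ∈ A ∧ v ∈ B ∨ u ∈ A ∧ v ∈ C ∨ u ∈ B ∧ v ∈ C) ∨
        (v ∈ A ∧ u ∈ B ∨ v ∈ A ∧ u ∈ C ∨ v ∈ B ∧ u ∈ C) := by
  constructor
  · rintro ⟨a, b, hab, h⟩
    obtain ⟨rfl, rfl⟩ | ⟨rfl, rfl⟩ := Sym2.eq_iff.mp hab
    exacts [.inl h, .inr h]
  · rintro (h | h)
    exacts [⟨u, v, rfl, h⟩, ⟨v, u, Sym2.eq_swap, h⟩]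

theorem edgeSet_multipartiteGraph_fin_three {V : Type*} (f : V → Option (Fin 3)) :
    (multipartiteGraph f).edgeSet =
      triEdges (f ⁻¹' {some 0}) (f ⁻¹' {some 1}) (f ⁻¹' {some 2}) := by
  ext e
  induction e with | h u v =>
  simp only [SimpleGraph.mem_edgeSet, multipartiteGraph.adj_iff, mk_mem_triEdges, mem_preimage,
    mem_singleton_iff]
  generalize f u = i, f v = j
  decide +revert

theorem exists_edgeSet_multipartiteGraph_eq_triEdges {V : Type*} {A B C : Set V}
    (hAB : Disjoint A B) (hAC : Disjoint A C) (hBC : Disjoint B C) :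
    ∃ f : V → Option (Fin 3), (multipartiteGraph f).edgeSet = triEdges A B C := by
  have parts_disjoint : Pairwise (Disjoint on ![A, B, C]) := by
    intro i j hij
    fin_cases i <;> fin_cases j <;> simp_all [onFun, disjoint_comm]
  obtain ⟨f, hf⟩ := exists_preimage_some_eq parts_disjoint
  exact ⟨f, by simp [edgeSet_multipartiteGraph_fin_three, hf]⟩

theorem hasTripartite2Partition_iff_exists_isCompl {n : ℕ} :
    HasTripartite2Partition n ↔ ∃ f g : Fin n → Option (Fin 3),
      IsCompl (multipartiteGraph f) (multipartiteGraph g) := by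
  simp only [isCompl_iff_edgeSet_top_eq_and_disjoint]
  constructor
  · rintro ⟨A₁, B₁, C₁, A₂, B₂, C₂, hAB₁, hAC₁, hBC₁, hAB₂, hAC₂, hBC₂, hpartition⟩
    obtain ⟨f, hf⟩ := exists_edgeSet_multipartiteGraph_eq_triEdges hAB₁ hAC₁ hBC₁
    obtain ⟨g, hg⟩ := exists_edgeSet_multipartiteGraph_eq_triEdges hAB₂ hAC₂ hBC₂
    exact ⟨f, g, by rwa [hf, hg]⟩
  · rintro ⟨f, g, hpartition⟩
    rw [edgeSet_multipartiteGraph_fin_three, edgeSet_multipartiteGraph_fin_three] at hpartition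
    have fibres_disjoint (f : Fin n → Option (Fin 3)) {i j : Fin 3} (hij : i ≠ j) :
        Disjoint (f ⁻¹' {some i}) (f ⁻¹' {some j}) :=
      (disjoint_singleton.mpr (by simpa using hij)).preimage f
    refine ⟨_, _, _, _, _, _, ?_, ?_, ?_, ?_, ?_, ?_, hpartition⟩ <;>
      exact fibres_disjoint _ (by decide)

/-- The complete graph `K_n` admits a tripartite 2-partition if and only if `n ≤ 5`. -/
theorem completeGraph_hasTripartite2Partition_iff (n : ℕ) :
    HasTripartite2Partition n ↔ n ≤ 5 := by
  rw [hasTripartite2Partition_iff_exists_isCompl, completeGraph_hasTripartite2Partition_iff_general,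
    mk_fin, mk_fin]
  norm_cast
  omega
end

section
/- Let F ∈ Z_2[x_1, …, x_n] be a multilinear polynomial such that for every pair of distinct indices {i, j}, both F^{00}_{ij} + F^{11}_{ij} and F^{01}_{ij} + F^{10}_{ij} are constant polynomials (identically 0 or identically 1). Then the total degree of F is at most 2; moreover, if the total degree of F equals 2, then F is a complete quadratic polynomial. -/
/-- The multilinear polynomial `F^{ab}_{ij}` obtained from `F` by substituting
`x_i := a` and `x_j := b`. -/
noncomputable def pinPoly {n : ℕ} (i j : Fin n) (a b : ZMod 2)
    (F : MvPolynomial (Fin n) (ZMod 2)) : MvPolynomial (Fin n) (ZMod 2) :=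
  MvPolynomial.bind₁
    (fun k => if k = i then MvPolynomial.C a else
      if k = j then MvPolynomial.C b else MvPolynomial.X k) F

/-!
Pinning `x_i := a` in a polynomial of degree at most one in `x_i` replaces the coefficient of a
monomial `m` avoiding `x_i` by `F_m + a F_{m x_i}`. So, for a monomial `m ≠ 1` avoiding `x_i` and
`x_j`, the coefficients of `m` in the two constant sums give
`2 F_m + F_{m x_i} + F_{m x_j} + F_{m x_i x_j} = 0` and `2 F_m + F_{m x_i} + F_{m x_j} = 0`.
Comparing the two, `F_{m x_i x_j} = 0`, which excludes every monomial of degree at least three. In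
characteristic two the second relation becomes `F_{m x_i} = F_{m x_j}`; for `m = x_k` it says that
two quadratic coefficients sharing a variable agree, hence all quadratic coefficients agree.
-/

section

open MvPolynomial Finsupp

theorem exists_eq_add_single_add_single {σ : Type*} {d : σ →₀ ℕ} (hd : ∀ i, d i ≤ 1)
    (hdeg : 2 ≤ d.degree) :
    ∃ (m : σ →₀ ℕ) (i j : σ), i ≠ j ∧ m i = 0 ∧ m j = 0 ∧ d = m + single i 1 + single j 1 := by
  have degree_le_card : d.degree ≤ d.support.card := by
    simpa [degree_apply] using Finset.sum_le_card_nsmul d.support d 1 fun i _ ↦ hd i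
  obtain ⟨i, hi, j, hj, hij⟩ := Finset.one_lt_card.mp (hdeg.trans degree_le_card)
  have eq_one {k : σ} (hk : k ∈ d.support) : d k = 1 :=
    (hd k).antisymm (Nat.one_le_iff_ne_zero.mpr (mem_support_iff.mp hk))
  refine ⟨(d.erase j).erase i, i, j, hij, by simp, by simp [erase_ne hij.symm], ?_⟩
  have erase_j : (d.erase j).erase i + single i 1 = d.erase j := by
    rw [← eq_one hi, ← erase_ne hij, erase_add_single]
  rw [erase_j, ← eq_one hj, erase_add_single]

theorem offDiag_eq_of_symm_of_row_eq {σ α : Type*} {f : σ → σ → α} (hsymm : ∀ i j, f i j = f j i)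
    (hf : ∀ k i j, k ≠ i → k ≠ j → f k i = f k j) {i j p q : σ} (hij : i ≠ j) (hpq : p ≠ q) :
    f i j = f p q := by
  obtain rfl | hip := eq_or_ne i p
  · exact hf i j q hij hpq
  · rw [hf i j p hij hip, hsymm, hf p i q hip.symm hpq]

variable {σ R : Type*} [DecidableEq σ] [CommSemiring R]

/-- The substitution `x_i := a` in `R[x_k : k ∈ σ]`. The pinned polynomial still has `x_i` among its
variables, so pins can be iterated; `F^{ab}_{ij}` is `pinVar j b (pinVar i a F)`. -/
noncomputable def pinVar (i : σ) (a : R) : MvPolynomial σ R →ₐ[R] MvPolynomial σ R :=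
  bind₁ (Function.update X i (C a))

theorem pinPoly_eq_pinVar_pinVar {n : ℕ} (i j : Fin n) (a b : ZMod 2)
    (F : MvPolynomial (Fin n) (ZMod 2)) :
    pinPoly i j a b F = pinVar j b (pinVar i a F) := by
  rw [pinPoly, pinVar, pinVar, bind₁_bind₁]
  congr 2 with k : 1
  by_cases hki : k = i <;> simp [hki, Function.update_apply]

theorem pinVar_monomial (i : σ) (a : R) (d : σ →₀ ℕ) (c : R) :
    pinVar i a (monomial d c) = monomial (d.erase i) (c * a ^ d i) := by
  have pinned_var : pinVar i a (monomial (single i (d i)) 1) = C (a ^ d i) := by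
    simp [pinVar, ← X_pow_eq_monomial]
  have other_vars : pinVar i a (monomial (d.erase i) c) = monomial (d.erase i) c := by
    rw [pinVar, bind₁_monomial, monomial_eq]
    congr 1
    refine Finset.prod_congr rfl fun k hk ↦ ?_
    have hki : k ≠ i := by
      rintro rfl
      simp at hk
    simp [hki]
  calc pinVar i a (monomial d c)
      = pinVar i a (monomial (d.erase i) c * monomial (single i (d i)) 1) := by
        rw [monomial_mul, mul_one, erase_add_single]
    _ = monomial (d.erase i) (c * a ^ d i) := by
        rw [map_mul, other_vars, pinned_var, mul_comm, C_mul_monomial, mul_comm]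

theorem pinVar_eq_sum (i : σ) (a : R) (F : MvPolynomial σ R) :
    pinVar i a F = ∑ d ∈ F.support, monomial (d.erase i) (F.coeff d * a ^ d i) := by
  conv_lhs => rw [F.as_sum, map_sum]
  simp only [pinVar_monomial]

theorem degreeOf_pinVar_le (i j : σ) (a : R) (F : MvPolynomial σ R) :
    (pinVar i a F).degreeOf j ≤ F.degreeOf j := by
  rw [pinVar_eq_sum]
  refine (degreeOf_sum_le _ _ _).trans (Finset.sup_le fun d hd ↦ ?_)
  refine degreeOf_le_iff.mpr fun m hm ↦ ?_
  obtain rfl : m = d.erase i := by simpa using support_monomial_subset hm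
  calc d.erase i j ≤ d j := by
        rw [erase_apply]
        split_ifs <;> omega
    _ ≤ F.degreeOf j := monomial_le_degreeOf j hd

theorem coeff_pinVar {i : σ} {F : MvPolynomial σ R} {N : ℕ} (hF : F.degreeOf i ≤ N) (a : R)
    {m : σ →₀ ℕ} (hm : m i = 0) :
    (pinVar i a F).coeff m = ∑ k ∈ Finset.range (N + 1), a ^ k * F.coeff (m + single i k) := by
  have eq_iff (d : σ →₀ ℕ) (k : ℕ) : d = m + single i k ↔ d i = k ∧ d.erase i = m := by
    constructor
    · rintro rfl
      simp [hm, erase_add, erase_of_notMem_support]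
    · rintro ⟨rfl, rfl⟩
      exact (erase_add_single i d).symm
  have sum_powers {d : σ →₀ ℕ} (hd : d ∈ F.support) :
      (monomial (d.erase i) (F.coeff d * a ^ d i)).coeff m =
        ∑ k ∈ Finset.range (N + 1), if d = m + single i k then a ^ k * F.coeff d else 0 := by
    have hdi : d i ∈ Finset.range (N + 1) :=
      Finset.mem_range_succ_iff.mpr ((monomial_le_degreeOf i hd).trans hF)
    simp only [eq_iff, ite_and, Finset.sum_ite_eq, hdi, if_true, coeff_monomial, mul_comm]
  rw [pinVar_eq_sum, coeff_sum, Finset.sum_congr rfl fun d hd ↦ sum_powers hd, Finset.sum_comm]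
  refine Finset.sum_congr rfl fun k _ ↦ ?_
  rw [Finset.sum_ite_eq']
  split_ifs with h
  · rfl
  · rw [MvPolynomial.notMem_support_iff.mp h, mul_zero]

theorem coeff_pinVar_of_degreeOf_le_one {i : σ} {F : MvPolynomial σ R} (hF : F.degreeOf i ≤ 1)
    (a : R) {m : σ →₀ ℕ} (hm : m i = 0) :
    (pinVar i a F).coeff m = F.coeff m + a * F.coeff (m + single i 1) := by
  simp [coeff_pinVar hF a hm, Finset.sum_range_succ]

theorem coeff_pinVar_pinVar {i j : σ} (hij : i ≠ j) {F : MvPolynomial σ R}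
    (hi : F.degreeOf i ≤ 1) (hj : F.degreeOf j ≤ 1) (a b : R) {m : σ →₀ ℕ}
    (hmi : m i = 0) (hmj : m j = 0) :
    (pinVar j b (pinVar i a F)).coeff m =
      F.coeff m + a * F.coeff (m + single i 1) + b * F.coeff (m + single j 1) +
        a * b * F.coeff (m + single i 1 + single j 1) := by
  have hmj_i : (m + Finsupp.single j 1 : σ →₀ ℕ) i = 0 := by simp [hmi, hij]
  rw [coeff_pinVar_of_degreeOf_le_one ((degreeOf_pinVar_le i j a F).trans hj) b hmj,
    coeff_pinVar_of_degreeOf_le_one hi a hmi, coeff_pinVar_of_degreeOf_le_one hi a hmj_i,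
    add_right_comm m (single j 1)]
  ring

/-- The hypothesis on pairs of pins, over any coefficient semiring: for all `i ≠ j`, both
`F^{00}_{ij} + F^{11}_{ij}` and `F^{01}_{ij} + F^{10}_{ij}` are constant polynomials. -/
def HasConstantPinSums (F : MvPolynomial σ R) : Prop :=
  ∀ i j : σ, i ≠ j →
    (∃ c : R, pinVar j 0 (pinVar i 0 F) + pinVar j 1 (pinVar i 1 F) = C c) ∧
    (∃ c : R, pinVar j 1 (pinVar i 0 F) + pinVar j 0 (pinVar i 1 F) = C c)

namespace HasConstantPinSums

variable {F : MvPolynomial σ R}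

theorem two_mul_coeff_add_coeff_add_coeff_eq_zero (hF : HasConstantPinSums F)
    (hml : ∀ i, F.degreeOf i ≤ 1) {i j : σ} (hij : i ≠ j) {m : σ →₀ ℕ} (hm : m ≠ 0)
    (hmi : m i = 0) (hmj : m j = 0) :
    2 * F.coeff m + F.coeff (m + single i 1) + F.coeff (m + single j 1) = 0 := by
  obtain ⟨c, hc⟩ := (hF i j hij).2
  have coeff_eq := congrArg (coeff m) hc
  simp only [coeff_add, coeff_pinVar_pinVar hij (hml i) (hml j) _ _ hmi hmj, coeff_C,
    hm.symm, if_false] at coeff_eq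
  convert coeff_eq using 1
  ring

theorem coeff_add_single_add_single_eq_zero (hF : HasConstantPinSums F)
    (hml : ∀ i, F.degreeOf i ≤ 1) {i j : σ} (hij : i ≠ j) {m : σ →₀ ℕ} (hm : m ≠ 0)
    (hmi : m i = 0) (hmj : m j = 0) :
    F.coeff (m + single i 1 + single j 1) = 0 := by
  obtain ⟨c, hc⟩ := (hF i j hij).1
  have coeff_eq := congrArg (coeff m) hc
  simp only [coeff_add, coeff_pinVar_pinVar hij (hml i) (hml j) _ _ hmi hmj, coeff_C,
    hm.symm, if_false] at coeff_eq
  have sum_eq_zero : 2 * F.coeff m + F.coeff (m + single i 1) + F.coeff (m + single j 1) +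
      F.coeff (m + single i 1 + single j 1) = 0 := by
    convert coeff_eq using 1
    ring
  rwa [hF.two_mul_coeff_add_coeff_add_coeff_eq_zero hml hij hm hmi hmj, zero_add] at sum_eq_zero

theorem eq_single_add_single_of_mem_support (hF : HasConstantPinSums F)
    (hml : ∀ i, F.degreeOf i ≤ 1) {d : σ →₀ ℕ} (hd : d ∈ F.support) (hdeg : 2 ≤ d.degree) :
    ∃ i j : σ, i ≠ j ∧ d = single i 1 + single j 1 := by
  have hd_le (i : σ) : d i ≤ 1 := (monomial_le_degreeOf i hd).trans (hml i)
  obtain ⟨m, i, j, hij, hmi, hmj, rfl⟩ := exists_eq_add_single_add_single hd_le hdeg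
  obtain rfl : m = 0 := by
    by_contra hm
    exact MvPolynomial.mem_support_iff.mp hd
      (hF.coeff_add_single_add_single_eq_zero hml hij hm hmi hmj)
  exact ⟨i, j, hij, by rw [zero_add]⟩

theorem totalDegree_le_two (hF : HasConstantPinSums F) (hml : ∀ i, F.degreeOf i ≤ 1) :
    F.totalDegree ≤ 2 := by
  refine Finset.sup_le fun d hd ↦ ?_
  change d.degree ≤ 2
  by_contra! hdeg
  obtain ⟨i, j, -, rfl⟩ := hF.eq_single_add_single_of_mem_support hml hd hdeg.le
  simp at hdeg

theorem coeff_single_add_single_eq [CharP R 2] (hF : HasConstantPinSums F)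
    (hml : ∀ i, F.degreeOf i ≤ 1) {i j p q : σ} (hij : i ≠ j) (hpq : p ≠ q) :
    F.coeff (single i 1 + single j 1) = F.coeff (single p 1 + single q 1) := by
  refine offDiag_eq_of_symm_of_row_eq (f := fun k l ↦ F.coeff (single k 1 + single l 1))
    (fun k l ↦ by rw [add_comm]) (fun k l r hkl hkr ↦ ?_) hij hpq
  obtain rfl | hlr := eq_or_ne l r
  · rfl
  have add_eq_zero : F.coeff (single k 1 + single l 1) + F.coeff (single k 1 + single r 1) = 0 := by
    simpa [CharTwo.two_eq_zero] using hF.two_mul_coeff_add_coeff_add_coeff_eq_zero hml hlr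
      (m := single k 1) (by simp) (by simp [hkl]) (by simp [hkr])
  calc F.coeff (single k 1 + single l 1)
      = F.coeff (single k 1 + single l 1) + F.coeff (single k 1 + single r 1) +
          F.coeff (single k 1 + single r 1) := (CharTwo.add_cancel_right _ _).symm
    _ = F.coeff (single k 1 + single r 1) := by rw [add_eq_zero, zero_add]

end HasConstantPinSums

theorem multilinear_const_pins_totalDegree_le_two_general [CharP R 2] (F : MvPolynomial σ R)
    (hml : ∀ i, F.degreeOf i ≤ 1) (hF : HasConstantPinSums F) :
    F.totalDegree ≤ 2 ∧
      (F.totalDegree = 2 → ∃ c : R, c ≠ 0 ∧ ∀ i j : σ, i ≠ j →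
        F.coeff (single i 1 + single j 1) = c) := by
  refine ⟨hF.totalDegree_le_two hml, fun htd ↦ ?_⟩
  obtain ⟨d, hd, hdeg⟩ : ∃ d ∈ F.support, 2 ≤ d.degree :=
    (Finset.le_sup_iff two_pos).mp htd.ge
  obtain ⟨p, q, hpq, rfl⟩ := hF.eq_single_add_single_of_mem_support hml hd hdeg
  exact ⟨_, MvPolynomial.mem_support_iff.mp hd, fun i j hij ↦
    hF.coeff_single_add_single_eq hml hij hpq⟩

end

/-- Let `F ∈ ℤ₂[x_1, …, x_n]` be multilinear such that for all distinct `i, j`, both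
`F^{00}_{ij} + F^{11}_{ij}` and `F^{01}_{ij} + F^{10}_{ij}` are constant polynomials.
Then `F` has total degree at most `2`; moreover if the total degree equals `2` then `F`
is a complete quadratic polynomial (every monomial `x_i x_j` occurs in `F`). -/
theorem multilinear_const_pins_totalDegree_le_two (n : ℕ)
    (F : MvPolynomial (Fin n) (ZMod 2))
    (hml : ∀ i : Fin n, F.degreeOf i ≤ 1)
    (hconst : ∀ i j : Fin n, i ≠ j →
      (∃ c : ZMod 2, pinPoly i j 0 0 F + pinPoly i j 1 1 F = MvPolynomial.C c) ∧
      (∃ c : ZMod 2, pinPoly i j 0 1 F + pinPoly i j 1 0 F = MvPolynomial.C c)) :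
    F.totalDegree ≤ 2 ∧
      (F.totalDegree = 2 → ∀ i j : Fin n, i ≠ j →
        F.coeff (Finsupp.single i 1 + Finsupp.single j 1) = 1) := by
  simp only [pinPoly_eq_pinVar_pinVar] at hconst
  refine (multilinear_const_pins_totalDegree_le_two_general F hml hconst).imp_right
    fun h htd i j hij ↦ ?_
  obtain ⟨c, hc, hcoeff⟩ := h htd
  exact (hcoeff i j hij).trans (Fin.eq_one_of_ne_zero c hc)
end

section
/- If n ≥ 6 and F ∈ Z_2[x_1, …, x_n] is a complete quadratic multilinear polynomial, then F does not have a twice-linear 2-partition. -/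
/-!
For a multilinear polynomial the mixed difference `F(eᵢ + eⱼ) - F(eᵢ) - F(eⱼ) + F(0)` is the
coefficient of `xᵢxⱼ`; on a product of two affine polynomials with linear parts `a` and `b` it is
`aᵢbⱼ + aⱼbᵢ`. In characteristic two a decomposition of a complete quadratic polynomial into `r`
such products therefore writes `J - I`, with `J` the all-ones matrix, as `AᵀB + BᵀA`, where `A`
and `B` have `r` rows. Hence `I = J - AᵀB - BᵀA` has rank at most `2r + 1`, so `n ≤ 2r + 1`.
-/

open MvPolynomial Matrix

section CubeValue

variable {σ R : Type*} [CommSemiring R]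

/-- The value of `F` at the vertex of the cube `{0, 1}^σ` encoded by its support `s`. -/
noncomputable def cubeValue (F : MvPolynomial σ R) (s : Finset σ) : R :=
  eval ((s : Set σ).indicator 1) F

theorem cubeValue_eq_sum_support [DecidableEq σ] (F : MvPolynomial σ R) (s : Finset σ) :
    cubeValue F s = ∑ d ∈ F.support with d.support ⊆ s, F.coeff d := by
  have prod_indicator (d : σ →₀ ℕ) :
      ∏ i ∈ d.support, (s : Set σ).indicator (1 : σ → R) i ^ d i =
        if d.support ⊆ s then 1 else 0 := by
    split_ifs with hd
    · exact Finset.prod_eq_one fun i hi => by simp [hd hi]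
    · obtain ⟨i, hid, his⟩ := Finset.not_subset.mp hd
      exact Finset.prod_eq_zero hid (by simp [his, Finsupp.mem_support_iff.mp hid])
  simp only [cubeValue, eval_eq, prod_indicator, mul_ite, mul_one, mul_zero, Finset.sum_filter]

theorem sum_single_one_apply [DecidableEq σ] (t : Finset σ) (k : σ) :
    (∑ i ∈ t, Finsupp.single i 1 : σ →₀ ℕ) k = if k ∈ t then 1 else 0 := by
  simp [Finsupp.finsetSum_apply, Finsupp.single_apply]

theorem sum_support_single_one_of_le_one {d : σ →₀ ℕ} (hd : ∀ i, d i ≤ 1) :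
    ∑ i ∈ d.support, Finsupp.single i 1 = d := by
  classical
  ext k
  have := hd k
  rw [sum_single_one_apply]
  split_ifs with hk <;> simp only [Finsupp.mem_support_iff] at hk <;> omega

theorem support_sum_single_one (t : Finset σ) :
    (∑ i ∈ t, Finsupp.single i 1 : σ →₀ ℕ).support = t := by
  classical
  ext k
  simp [sum_single_one_apply]

theorem cubeValue_eq_sum_powerset {F : MvPolynomial σ R} (hF : ∀ i, F.degreeOf i ≤ 1)
    (s : Finset σ) :
    cubeValue F s = ∑ t ∈ s.powerset, F.coeff (∑ i ∈ t, Finsupp.single i 1) := by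
  classical
  have recover {d : σ →₀ ℕ} (hd : d ∈ F.support) : ∑ i ∈ d.support, Finsupp.single i 1 = d :=
    sum_support_single_one_of_le_one fun i => (monomial_le_degreeOf i hd).trans (hF i)
  rw [cubeValue_eq_sum_support]
  refine Finset.sum_of_injOn Finsupp.support ?_ ?_ ?_ ?_
  · intro d hd e he hde
    rw [← recover (Finset.mem_filter.mp hd).1, ← recover (Finset.mem_filter.mp he).1, hde]
  · exact fun d hd => Finset.mem_powerset.mpr (Finset.mem_filter.mp hd).2
  · intro t ht hnot
    by_contra hcoeff
    refine hnot ⟨_, Finset.mem_filter.mpr ⟨mem_support_iff.mpr hcoeff, ?_⟩,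
      support_sum_single_one t⟩
    rw [support_sum_single_one]
    exact Finset.mem_powerset.mp ht
  · exact fun d hd => by rw [recover (Finset.mem_filter.mp hd).1]

theorem cubeValue_empty {F : MvPolynomial σ R} (hF : ∀ i, F.degreeOf i ≤ 1) :
    cubeValue F ∅ = F.coeff 0 := by
  simp [cubeValue_eq_sum_powerset hF]

theorem cubeValue_singleton {F : MvPolynomial σ R} (hF : ∀ i, F.degreeOf i ≤ 1) (i : σ) :
    cubeValue F {i} = F.coeff 0 + F.coeff (Finsupp.single i 1) := by
  classical
  rw [cubeValue_eq_sum_powerset hF, ← insert_empty_eq,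
    Finset.sum_powerset_insert (Finset.notMem_empty i)]
  simp

theorem cubeValue_pair [DecidableEq σ] {F : MvPolynomial σ R} (hF : ∀ i, F.degreeOf i ≤ 1)
    {i j : σ} (hij : i ≠ j) :
    cubeValue F {i, j} = F.coeff 0 + F.coeff (Finsupp.single i 1) + F.coeff (Finsupp.single j 1) +
      F.coeff (Finsupp.single i 1 + Finsupp.single j 1) := by
  rw [cubeValue_eq_sum_powerset hF, Finset.sum_powerset_insert (by simpa using hij),
    ← insert_empty_eq j, Finset.sum_powerset_insert (Finset.notMem_empty j),
    Finset.sum_powerset_insert (Finset.notMem_empty j)]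
  simp only [Finset.powerset_empty, Finset.sum_singleton, insert_empty_eq, Finset.sum_empty,
    Finset.sum_pair hij]
  ring

end CubeValue

section MixedDifference

variable {σ R : Type*} [CommRing R] [DecidableEq σ]

/-- The second-order mixed difference at the origin, in the directions `i` and `j`, of a function
on the cube `{0, 1}^σ` whose vertices are encoded by their supports. -/
def mixedDifference (f : Finset σ → R) (i j : σ) : R :=
  f {i, j} - f {i} - f {j} + f ∅

theorem mixedDifference_sum {κ : Type*} (s : Finset κ) (f : κ → Finset σ → R) (i j : σ) :
    mixedDifference (∑ k ∈ s, f k) i j = ∑ k ∈ s, mixedDifference (f k) i j := by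
  simp only [mixedDifference, Finset.sum_apply, Finset.sum_sub_distrib, Finset.sum_add_distrib]

theorem mixedDifference_cubeValue {F : MvPolynomial σ R} (hF : ∀ i, F.degreeOf i ≤ 1)
    {i j : σ} (hij : i ≠ j) :
    mixedDifference (cubeValue F) i j = F.coeff (Finsupp.single i 1 + Finsupp.single j 1) := by
  rw [mixedDifference, cubeValue_pair hF hij, cubeValue_singleton hF, cubeValue_singleton hF,
    cubeValue_empty hF]
  ring

theorem cubeValue_pair_of_totalDegree_le_one {L : MvPolynomial σ R} (hL : L.totalDegree ≤ 1)
    {i j : σ} (hij : i ≠ j) :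
    cubeValue L {i, j} =
      L.coeff 0 + L.coeff (Finsupp.single i 1) + L.coeff (Finsupp.single j 1) := by
  have coeff_eq_zero : L.coeff (Finsupp.single i 1 + Finsupp.single j 1) = 0 := by
    by_contra hcoeff
    have two_le_totalDegree : 2 ≤ L.totalDegree := by
      simpa [Finsupp.sum_add_index'] using le_totalDegree (mem_support_iff.mpr hcoeff)
    omega
  rw [cubeValue_pair (fun k => (degreeOf_le_totalDegree L k).trans hL) hij, coeff_eq_zero, add_zero]

theorem mixedDifference_cubeValue_mul {L M : MvPolynomial σ R} (hL : L.totalDegree ≤ 1)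
    (hM : M.totalDegree ≤ 1) {i j : σ} (hij : i ≠ j) :
    mixedDifference (cubeValue L * cubeValue M) i j =
      L.coeff (Finsupp.single i 1) * M.coeff (Finsupp.single j 1) +
        M.coeff (Finsupp.single i 1) * L.coeff (Finsupp.single j 1) := by
  have multilinear_L (k : σ) := (degreeOf_le_totalDegree L k).trans hL
  have multilinear_M (k : σ) := (degreeOf_le_totalDegree M k).trans hM
  simp only [mixedDifference, Pi.mul_apply, cubeValue_pair_of_totalDegree_le_one hL hij,
    cubeValue_pair_of_totalDegree_le_one hM hij, cubeValue_singleton multilinear_L,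
    cubeValue_singleton multilinear_M, cubeValue_empty multilinear_L, cubeValue_empty multilinear_M]
  ring

end MixedDifference

theorem coeff_single_add_single_eq_sum_of_cubeValue_eq {σ κ R : Type*} [Fintype κ]
    [CommRing R] {F : MvPolynomial σ R} {L M : κ → MvPolynomial σ R} (hF : ∀ i, F.degreeOf i ≤ 1)
    (hL : ∀ k, (L k).totalDegree ≤ 1) (hM : ∀ k, (M k).totalDegree ≤ 1)
    (h : cubeValue F = ∑ k, cubeValue (L k) * cubeValue (M k)) {i j : σ} (hij : i ≠ j) :
    F.coeff (Finsupp.single i 1 + Finsupp.single j 1) =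
      ∑ k, ((L k).coeff (Finsupp.single i 1) * (M k).coeff (Finsupp.single j 1) +
        (M k).coeff (Finsupp.single i 1) * (L k).coeff (Finsupp.single j 1)) := by
  classical
  rw [← mixedDifference_cubeValue hF hij, h, mixedDifference_sum]
  exact Finset.sum_congr rfl fun k _ => mixedDifference_cubeValue_mul (hL k) (hM k) hij

section MatrixFactorization

variable {m n κ R : Type*} [Fintype m] [DecidableEq m] [Fintype n] [Fintype κ] [CommRing R]
  [Nontrivial R]

theorem card_le_card_of_mul_eq_one {A : Matrix m n R} {B : Matrix n m R} (h : A * B = 1) :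
    Fintype.card m ≤ Fintype.card n :=
  calc
    Fintype.card m = (A * B).rank := by rw [h, rank_one]
    _ ≤ A.rank := rank_mul_le_left A B
    _ ≤ Fintype.card n := rank_le_card_width A

theorem card_le_of_transpose_mul_add_transpose_mul_eq {A B : Matrix κ m R}
    (h : Aᵀ * B + Bᵀ * A = vecMulVec 1 1 - 1) :
    Fintype.card m ≤ 2 * Fintype.card κ + 1 := by
  have factorization :
      fromCols (fromCols Aᵀ Bᵀ) (replicateCol Unit 1) *
        fromRows (fromRows (-B) (-A)) (replicateRow Unit 1) = 1 := by
    rw [fromCols_mul_fromRows, fromCols_mul_fromRows, ← vecMulVec_eq, Matrix.mul_neg,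
      Matrix.mul_neg, ← neg_add, h]
    abel
  simpa [two_mul] using card_le_card_of_mul_eq_one factorization

end MatrixFactorization

/-- Over a general `R`, congruence modulo the relations `xᵢ² = xᵢ` is equality on `{0, 1}^σ`, which
can be weaker than equality on `R^σ`. -/
theorem complete_quadratic_no_twice_linear_partition_general {σ κ R : Type*} [Fintype σ]
    [Fintype κ] [CommRing R] [CharP R 2] (hcard : 2 * Fintype.card κ + 1 < Fintype.card σ)
    (F : MvPolynomial σ R) (hml : ∀ i, F.degreeOf i ≤ 1)
    (hcomplete : ∀ i j, i ≠ j → F.coeff (Finsupp.single i 1 + Finsupp.single j 1) = 1) :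
    ¬ ∃ L M : κ → MvPolynomial σ R,
        (∀ k, (L k).totalDegree ≤ 1) ∧ (∀ k, (M k).totalDegree ≤ 1) ∧
        ∀ x : σ → R, (∀ i, x i = 0 ∨ x i = 1) →
          eval x F = ∑ k, eval x (L k) * eval x (M k) := by
  classical
  rintro ⟨L, M, hL, hM, hF⟩
  have : Nontrivial R := CharP.nontrivial_of_char_ne_one (v := 2) (by decide)
  have cubeValue_F : cubeValue F = ∑ k, cubeValue (L k) * cubeValue (M k) := by
    ext s
    simpa [cubeValue] using hF _ fun i => Set.indicator_eq_zero_or_self (s : Set σ) 1 i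
  let A : Matrix κ σ R := of fun k i => (L k).coeff (Finsupp.single i 1)
  let B : Matrix κ σ R := of fun k i => (M k).coeff (Finsupp.single i 1)
  refine hcard.not_ge (card_le_of_transpose_mul_add_transpose_mul_eq (A := A) (B := B) ?_)
  ext i j
  rcases eq_or_ne i j with rfl | hij
  · have diagonal_eq_zero : (Aᵀ * B + Bᵀ * A) i i = 0 := by
      simp only [Matrix.add_apply, mul_apply, transpose_apply, mul_comm (B _ _),
        CharTwo.add_self_eq_zero]
    simp [diagonal_eq_zero]
  · have offDiagonal_eq_one : (Aᵀ * B + Bᵀ * A) i j = 1 := by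
      rw [← hcomplete i j hij,
        coeff_single_add_single_eq_sum_of_cubeValue_eq hml hL hM cubeValue_F hij,
        Finset.sum_add_distrib]
      rfl
    simp [offDiagonal_eq_one, hij]

/-- If `n ≥ 6` and `F ∈ ℤ₂[x_1, …, x_n]` is a complete quadratic multilinear
polynomial, then `F` does not have a twice-linear 2-partition: there are no
polynomials `L₁, L₂, L₃, L₄` of total degree at most `1` with
`F = L₁·L₂ + L₃·L₄` (products reduced modulo `x_i² = x_i`; equivalently,
equality holds as functions on `(ℤ₂)ⁿ`). -/
theorem complete_quadratic_no_twice_linear_partition (n : ℕ) (hn : 6 ≤ n)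
    (F : MvPolynomial (Fin n) (ZMod 2))
    (hml : ∀ i : Fin n, F.degreeOf i ≤ 1)
    (hdeg : F.totalDegree = 2)
    (hcomplete : ∀ i j : Fin n, i ≠ j →
      F.coeff (Finsupp.single i 1 + Finsupp.single j 1) = 1) :
    ¬ ∃ L₁ L₂ L₃ L₄ : MvPolynomial (Fin n) (ZMod 2),
        L₁.totalDegree ≤ 1 ∧ L₂.totalDegree ≤ 1 ∧ L₃.totalDegree ≤ 1 ∧
        L₄.totalDegree ≤ 1 ∧
        ∀ x : Fin n → ZMod 2,
          MvPolynomial.eval x F =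
            MvPolynomial.eval x L₁ * MvPolynomial.eval x L₂ +
              MvPolynomial.eval x L₃ * MvPolynomial.eval x L₄ := by
  rintro ⟨L₁, L₂, L₃, L₄, h₁, h₂, h₃, h₄, hF⟩
  exact complete_quadratic_no_twice_linear_partition_general (κ := Fin 2)
    (by rw [Fintype.card_fin, Fintype.card_fin]; omega) F hml hcomplete
    ⟨![L₁, L₃], ![L₂, L₄], Fin.forall_fin_two.mpr ⟨h₁, h₃⟩, Fin.forall_fin_two.mpr ⟨h₂, h₄⟩,
      fun x _ => by simp [hF]⟩
end

section
/- Let b_1(x_1, x_2) and b_2(y_1, y_2) be binary signatures in Ô. Suppose that connecting the variable x_1 of b_1 with the variable y_1 of b_2 via ≠_2 — that is, forming the binary signature c(x_2, y_2) = b_1(0, x_2)·b_2(1, y_2) + b_1(1, x_2)·b_2(0, y_2) — yields c = λ·≠_2 for some nonzero real λ. Then b_2 is a nonzero constant multiple of b_1, and moreover connecting the variable x_2 of b_1 with the variable y_2 of b_2 via ≠_2 — that is, forming d(x_1, y_1) = b_1(x_1, 0)·b_2(y_1, 1) + b_1(x_1, 1)·b_2(y_1, 0) — yields d = λ·≠_2.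 -/
/-!
Regard a binary signature as a `2 × 2` matrix and write `X` for `≠₂`, so that connecting first
variables is `fᵀ * X * g` and connecting second variables is the same operation on transposes.
If `f` has parity then `fᵀ * X * f = p • X`, where `p` is the permanent of `f`; as `fᵀ` has parity
and the same permanent, also `f * X * fᵀ = p • X`. Multiplying `fᵀ * X * g = c • X` on the left by
`f * X` and using `X * X = 1` then gives `p • g = c • f`. Connecting both sides with `g` shows that
`c * c` is `p` times the permanent of `g`. So if `c` is a unit, then `p` is a unit and `g` is a unit
multiple of `f`, and for multiples of `f` the two connections coincide.
-/

namespace Stmt12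

/-- A binary signature satisfies ARS: `conj (f x y) = f x̄ ȳ`. -/
def ARS2 (f : Bool → Bool → ℂ) : Prop :=
  ∀ x y : Bool, (starRingEnd ℂ) (f x y) = f (!x) (!y)

/-- A binary signature has parity: its support lies in the even-weight inputs
`{00, 11}` or in the odd-weight inputs `{01, 10}` (the zero signature counts). -/
def HasParity2 (f : Bool → Bool → ℂ) : Prop :=
  (∀ x y : Bool, x ≠ y → f x y = 0) ∨ (∀ x y : Bool, x = y → f x y = 0)

open Matrix

section CommSemiring

variable {R : Type*} [CommSemiring R] {f g : Matrix Bool Bool R} {c : R}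

/-- `HasParity2` with values in an arbitrary type with zero, for signatures regarded as matrices. -/
def HasParity {R : Type*} [Zero R] (f : Matrix Bool Bool R) : Prop :=
  (∀ x y : Bool, x ≠ y → f x y = 0) ∨ (∀ x y : Bool, x = y → f x y = 0)

/-- The binary disequality signature `≠₂`, as a matrix. -/
def disequality (R : Type*) [Zero R] [One R] : Matrix Bool Bool R :=
  of fun x y => if x = y then 0 else 1

/-- The signature obtained by connecting the first variable of `f` with the first variable of `g`
via `≠₂`. Connecting the second variables is `connect fᵀ gᵀ`. -/
def connect (f g : Matrix Bool Bool R) : Matrix Bool Bool R :=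
  fᵀ * disequality R * g

theorem disequality_mul_self {R : Type*} [NonAssocSemiring R] :
    disequality R * disequality R = 1 := by
  ext x y
  cases x <;> cases y <;> simp [disequality, mul_apply]

theorem connect_apply (f g : Matrix Bool Bool R) (x y : Bool) :
    connect f g x y = f false x * g true y + f true x * g false y := by
  simp [connect, disequality, mul_apply, add_comm]

theorem connect_smul_left (c : R) (f g : Matrix Bool Bool R) :
    connect (c • f) g = c • connect f g := by
  simp only [connect, transpose_smul, smul_mul_assoc]

theorem connect_smul_right (c : R) (f g : Matrix Bool Bool R) :
    connect f (c • g) = c • connect f g :=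
  mul_smul_comm c _ g

theorem connect_eq_smul_disequality_iff :
    connect f g = c • disequality R ↔
      ∀ x y : Bool, f false x * g true y + f true x * g false y = if x = y then 0 else c := by
  simp [← Matrix.ext_iff, connect_apply, disequality]

theorem permanent_bool (f : Matrix Bool Bool R) :
    f.permanent = f false false * f true true + f false true * f true false := by
  have perms : (Finset.univ : Finset (Equiv.Perm Bool)) = {1, Equiv.swap false true} := by decide
  have one_ne_swap : (1 : Equiv.Perm Bool) ≠ Equiv.swap false true := by decide
  simp [permanent, perms, Finset.sum_pair one_ne_swap, mul_comm]

theorem connect_self_false_true (f : Matrix Bool Bool R) :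
    connect f f false true = f.permanent := by
  rw [connect_apply, permanent_bool, mul_comm (f true false)]

theorem HasParity.transpose {R : Type*} [Zero R] {f : Matrix Bool Bool R} (hf : HasParity f) :
    HasParity fᵀ :=
  hf.imp (fun h x y hxy => h y x hxy.symm) (fun h x y hxy => h y x hxy.symm)

theorem HasParity.connect_self (hf : HasParity f) :
    connect f f = f.permanent • disequality R := by
  rw [connect_eq_smul_disequality_iff, permanent_bool]
  rcases hf with even | odd
  · have h01 := even false true (by decide)
    have h10 := even true false (by decide)
    rintro (_ | _) (_ | _) <;> simp [h01, h10, mul_comm]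
  · have h00 := odd false false rfl
    have h11 := odd true true rfl
    rintro (_ | _) (_ | _) <;> simp [h00, h11, mul_comm]

theorem HasParity.connect_transpose_self (hf : HasParity f) : connect fᵀ fᵀ = connect f f := by
  rw [hf.transpose.connect_self, permanent_transpose, hf.connect_self]

theorem HasParity.permanent_smul_eq (hf : HasParity f) (hc : connect f g = c • disequality R) :
    f.permanent • g = c • f := by
  calc f.permanent • g
      = connect fᵀ fᵀ * disequality R * g := by
        rw [hf.connect_transpose_self, hf.connect_self, smul_mul_assoc, disequality_mul_self,
          smul_mul_assoc, one_mul]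
    _ = f * disequality R * connect f g := by
        simp only [connect, transpose_transpose, Matrix.mul_assoc]
    _ = c • f := by
        rw [hc, mul_smul_comm, Matrix.mul_assoc, disequality_mul_self, mul_one]

theorem HasParity.isUnit_permanent (hf : HasParity f) (hc : connect f g = c • disequality R)
    (hu : IsUnit c) : IsUnit f.permanent := by
  have smul_connect : c • connect f g = f.permanent • connect g g := by
    rw [← connect_smul_left, ← hf.permanent_smul_eq hc, connect_smul_left]
  have sq_eq : c * c = f.permanent * g.permanent := by
    simpa [hc, disequality, connect_self_false_true] using congr_fun₂ smul_connect false true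
  exact isUnit_of_mul_isUnit_left (sq_eq ▸ hu.mul hu)

theorem bell_connect_general (hf : HasParity f) (hu : IsUnit c)
    (hc : connect f g = c • disequality R) :
    (∃ μ : R, IsUnit μ ∧ g = μ • f) ∧ connect fᵀ gᵀ = c • disequality R := by
  obtain ⟨p, hp⟩ := hf.isUnit_permanent hc hu
  have g_eq : g = (↑p⁻¹ * c) • f := by
    rw [mul_smul, ← hf.permanent_smul_eq hc, ← hp, smul_smul, Units.inv_mul, one_smul]
  refine ⟨⟨↑p⁻¹ * c, p⁻¹.isUnit.mul hu, g_eq⟩, ?_⟩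
  calc connect fᵀ gᵀ
      = connect f g := by
        rw [g_eq, transpose_smul, connect_smul_right, connect_smul_right,
          hf.connect_transpose_self]
    _ = c • disequality R := hc

end CommSemiring

/-- Let `b₁(x₁,x₂)` and `b₂(y₁,y₂)` be binary signatures in `Ô` (satisfying ARS and
having parity).  If connecting `x₁` of `b₁` with `y₁` of `b₂` via `≠₂` yields
`λ·≠₂` for some nonzero real `λ`, then `b₂` is a nonzero constant multiple of `b₁`,
and connecting `x₂` of `b₁` with `y₂` of `b₂` via `≠₂` also yields `λ·≠₂`. -/
theorem bell_connect (b₁ b₂ : Bool → Bool → ℂ)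
    (hb₁ : ARS2 b₁ ∧ HasParity2 b₁) (hb₂ : ARS2 b₂ ∧ HasParity2 b₂)
    (lam : ℝ) (hlam : lam ≠ 0)
    (hc : ∀ x y : Bool,
      b₁ false x * b₂ true y + b₁ true x * b₂ false y =
        if x = y then 0 else (lam : ℂ)) :
    (∃ μ : ℂ, μ ≠ 0 ∧ ∀ x y : Bool, b₂ x y = μ * b₁ x y) ∧
    (∀ x y : Bool,
      b₁ x false * b₂ y true + b₁ x true * b₂ y false =
        if x = y then 0 else (lam : ℂ)) := by
  obtain ⟨⟨μ, hμ, b₂_eq⟩, hd⟩ := bell_connect_general (f := of b₁) (g := of b₂) hb₁.2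
    (Complex.ofReal_ne_zero.mpr hlam).isUnit (connect_eq_smul_disequality_iff.mpr hc)
  exact ⟨⟨μ, hμ.ne_zero, congr_fun₂ b₂_eq⟩, connect_eq_smul_disequality_iff.mp hd⟩

end Stmt12
end

section
/- Let f : {0,1}^n → ℂ be a signature of arity n ≥ 3 and let α ∈ {0,1}^n with f(α) ≠ 0 and Hamming weight wt(α) = k, where k ≠ 0 and k ≠ n. Then there exist distinct indices i, j and an assignment β to the remaining n − 2 variables with wt(β) = k − 1 such that (∂_{ij} f)(β) ≠ 0. In particular, if ∂_{ij} f is identically zero for every pair of distinct indices {i, j}, then f(α) = 0 for every α with 0 < wt(α) < n. -/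
/-!
Suppose `f` satisfies `f β = -f β'` whenever `β'` arises from a rearrangement `β` of `α` by
exchanging two unequal coordinates. As `α` takes two values on at least three coordinates, it has
`α a = α b ≠ α c` with `a ≠ b`. The three assignments obtained by placing the odd value `α c` at
`a`, `b` or `c` pairwise differ by such an exchange, so `f α = -f α`. Merging at `{i, j}` adds up
exactly the two values of `f` related by an exchange at `i, j`.
-/

namespace Stmt13

/-- The Hamming weight of an assignment. -/
def hw {ι : Type*} [Fintype ι] (x : ι → Bool) : ℕ :=
  (Finset.univ.filter fun i => x i = true).card

/-- The merge `∂_{ij} f = f^{01}_{ij} + f^{10}_{ij}` of `f` at the distinct indices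
`i, j` via the binary disequality, a signature on the remaining variables. -/
def merge {n : ℕ} (f : (Fin n → Bool) → ℂ) (i j : Fin n)
    (y : {k : Fin n // k ≠ i ∧ k ≠ j} → Bool) : ℂ :=
  f (fun k => if h : k = i then false else if h' : k = j then true else y ⟨k, h, h'⟩) +
    f (fun k => if h : k = i then true else if h' : k = j then false else y ⟨k, h, h'⟩)

section CompSwap

variable {ι κ M : Type*} [DecidableEq ι]

theorem comp_swap_eq_self {α : ι → κ} {a b : ι} (h : α a = α b) : α ∘ Equiv.swap a b = α := by
  rw [Equiv.comp_swap_eq_update, h, Function.update_eq_self, ← h, Function.update_eq_self]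

theorem comp_swap_comp_swap {α : ι → κ} {a b c : ι} (hab : α a = α b) (hac : a ≠ c)
    (hbc : b ≠ c) : (α ∘ Equiv.swap a c) ∘ Equiv.swap a b = α ∘ Equiv.swap b c := by
  have conj : Equiv.swap a b * Equiv.swap b c = Equiv.swap a c * Equiv.swap a b := by
    rw [Equiv.mul_swap_eq_swap_mul, Equiv.swap_apply_right,
      Equiv.swap_apply_of_ne_of_ne hac.symm hbc.symm]
  calc (α ∘ Equiv.swap a c) ∘ Equiv.swap a b
      = α ∘ ⇑(Equiv.swap a c * Equiv.swap a b) := rfl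
    _ = (α ∘ Equiv.swap a b) ∘ Equiv.swap b c := by rw [← conj]; rfl
    _ = α ∘ Equiv.swap b c := by rw [comp_swap_eq_self hab]

theorem eq_zero_of_forall_add_comp_swap_eq_zero [AddGroup M] [IsAddTorsionFree M] [Fintype ι]
    [Fintype κ] (hcard : Fintype.card κ < Fintype.card ι) {f : (ι → κ) → M} {α : ι → κ}
    (hα : ∀ x, ∃ c, α c ≠ x)
    (hf : ∀ (σ : Equiv.Perm ι) (i j : ι), (α ∘ σ) i ≠ (α ∘ σ) j →
      f (α ∘ σ) + f ((α ∘ σ) ∘ Equiv.swap i j) = 0) :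
    f α = 0 := by
  obtain ⟨a, b, hab, hαab⟩ := Fintype.exists_ne_map_eq_of_card_lt α hcard
  obtain ⟨c, hc⟩ := hα (α a)
  have hac : a ≠ c := fun h => hc (h ▸ rfl)
  have hbc : b ≠ c := fun h => hc (h ▸ hαab.symm)
  have swap_ac : f α + f (α ∘ Equiv.swap a c) = 0 := hf 1 a c hc.symm
  have swap_bc : f α + f (α ∘ Equiv.swap b c) = 0 :=
    hf 1 b c fun h => hc (h.symm.trans hαab.symm)
  have swap_ab : f (α ∘ Equiv.swap a c) + f (α ∘ Equiv.swap b c) = 0 := by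
    rw [← comp_swap_comp_swap hαab hac hbc]
    apply hf (Equiv.swap a c)
    simpa [Equiv.swap_apply_of_ne_of_ne hab.symm hbc, ← hαab] using hc
  refine self_eq_neg.mp ?_
  calc f α = f (α ∘ Equiv.swap a c) :=
        (eq_neg_of_add_eq_zero_left swap_bc).trans (eq_neg_of_add_eq_zero_left swap_ab).symm
    _ = -f α := eq_neg_of_add_eq_zero_right swap_ac

end CompSwap

section HammingWeight

variable {ι : Type*} [Fintype ι] {α : ι → Bool}

theorem hw_comp_equiv {ι' : Type*} [Fintype ι'] (e : ι' ≃ ι) : hw (α ∘ e) = hw α :=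
  Finset.card_equiv e (by simp)

theorem exists_apply_ne_of_hw_ne (h0 : hw α ≠ 0) (h1 : hw α ≠ Fintype.card ι) (x : Bool) :
    ∃ c, α c ≠ x := by
  by_contra! h
  cases x <;> simp [hw, h] at h0 h1

theorem hw_restrict_of_ne [DecidableEq ι] {i j : ι} (hij : α i ≠ α j) :
    hw (fun l : {l // l ≠ i ∧ l ≠ j} => α l) = hw α - 1 := by
  obtain ⟨t, ht, ht_eq⟩ : ∃ t, α t = true ∧ (t = i ∨ t = j) := by
    cases hi : α i
    · exact ⟨j, by simpa [hi] using hij.symm, .inr rfl⟩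
    · exact ⟨i, hi, .inl rfl⟩
  have filter_eq_erase : ({l | α l = true} : Finset ι).filter (fun l => l ≠ i ∧ l ≠ j) =
      ({l | α l = true} : Finset ι).erase t := by
    grind
  calc hw (fun l : {l // l ≠ i ∧ l ≠ j} => α l)
      = (({l | α l = true} : Finset ι).filter fun l => l ≠ i ∧ l ≠ j).card := by
        rw [← Finset.card_subtype, hw]
        congr 1
        ext l
        simp
    _ = hw α - 1 := by
        rw [filter_eq_erase, Finset.card_erase_of_mem (by simpa using ht), hw]

end HammingWeight

section Merge

variable {n : ℕ} {f : (Fin n → Bool) → ℂ} {α : Fin n → Bool}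

theorem merge_restrict (i j : Fin n) :
    merge f i j (fun l => α l) =
      f (Function.update (Function.update α j true) i false) +
        f (Function.update (Function.update α j false) i true) := by
  unfold merge
  congr 2 <;> funext l <;> simp [Function.update_apply]

theorem merge_restrict_of_ne {i j : Fin n} (hij : α i ≠ α j) :
    merge f i j (fun l => α l) = f α + f (α ∘ Equiv.swap i j) := by
  have update_self_self : Function.update (Function.update α j (α j)) i (α i) = α := by
    rw [Function.update_eq_self, Function.update_eq_self]
  rw [merge_restrict, Equiv.comp_swap_eq_update]
  cases hi : α i
  · have hj : α j = true := by simpa [hi] using hij.symm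
    rw [hi, hj] at update_self_self
    rw [hj, update_self_self]
  · have hj : α j = false := by simpa [hi] using hij.symm
    rw [hi, hj] at update_self_self
    rw [hj, update_self_self, add_comm]

theorem exists_merge_ne_zero (hn : 3 ≤ n) (hα : f α ≠ 0) (h0 : hw α ≠ 0) (h1 : hw α ≠ n) :
    ∃ i j : Fin n, i ≠ j ∧ ∃ β : {l : Fin n // l ≠ i ∧ l ≠ j} → Bool,
      hw β = hw α - 1 ∧ merge f i j β ≠ 0 := by
  contrapose! hα with hmerge
  refine eq_zero_of_forall_add_comp_swap_eq_zero (by simpa [Nat.lt_iff_add_one_le] using hn)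
    (exists_apply_ne_of_hw_ne h0 (by simpa using h1)) fun σ i j hij => ?_
  rw [← merge_restrict_of_ne hij]
  refine hmerge i j (ne_of_apply_ne _ hij) _ ?_
  rw [hw_restrict_of_ne hij, hw_comp_equiv]

end Merge

/-- Let `f` be a signature of arity `n ≥ 3` and `α` an input with `f α ≠ 0` and
Hamming weight `k ∉ {0, n}`.  Then there are distinct indices `i, j` and an input `β`
of the merged signature `∂_{ij} f` of weight `k - 1` with `(∂_{ij} f)(β) ≠ 0`.
In particular, if all merges `∂_{ij} f` vanish identically, then `f` vanishes on all
inputs of weight strictly between `0` and `n`. -/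
theorem merge_nonzero_of_nonzero (n : ℕ) (hn : 3 ≤ n) (f : (Fin n → Bool) → ℂ) :
    (∀ (α : Fin n → Bool) (k : ℕ), f α ≠ 0 → hw α = k → k ≠ 0 → k ≠ n →
      ∃ i j : Fin n, i ≠ j ∧
        ∃ β : {l : Fin n // l ≠ i ∧ l ≠ j} → Bool,
          hw β = k - 1 ∧ merge f i j β ≠ 0) ∧
    ((∀ i j : Fin n, i ≠ j → ∀ y, merge f i j y = 0) →
      ∀ α : Fin n → Bool, 0 < hw α → hw α < n → f α = 0) := by
  refine ⟨?_, fun hmerge α hpos hlt => ?_⟩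
  · rintro α _ hα rfl h0 h1
    exact exists_merge_ne_zero hn hα h0 h1
  · by_contra hα
    obtain ⟨i, j, hij, β, -, hβ⟩ := exists_merge_ne_zero hn hα hpos.ne' hlt.ne
    exact hβ (hmerge i j hij β)

end Stmt13
end

section
/- Let f : {0,1}^n → ℂ (n ≥ 4) satisfy ARS and second order orthogonality with constant λ. Then: (i) for all pairwise distinct indices i, j, k and every (a, b, c) ∈ {0,1}^3, the sum over assignments y to the remaining n − 3 variables of |f^{abc}_{ijk}(y)|^2 equals λ/2; (ii) for all pairwise distinct indices i, j, k, ℓ, the four quantities ∑_y |f^{abcd}_{ijkℓ}(y)|^2 for (a,b,c,d) ∈ {0000, 0011, 1100, 1111} are all equal, and likewise the four quantities for (a,b,c,d) ∈ {0001, 0010, 1101, 1110} are all equal. -/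
/-!
Fix an even `m` and a complement-invariant weight `w` on `{0,1}^ι` all of whose `m`-coordinate
marginals equal `c`. Summing out one of `m + 1` pinned coordinates shows that flipping a single
pinned bit turns a marginal `S` into `c - S`. Flipping all `m + 1` bits is an odd number of flips,
so it also gives `c - S`; but complement invariance says that it gives `S`. Hence every marginal on
`m + 1` coordinates is `c / 2`, and, repeating the flipping argument one level up, a marginal on
`m + 2` coordinates depends only on the parity of its pinned bits. The theorem is the case `m = 2`
for the weight `|f|²`.
-/

namespace Stmt14

/-- The signature obtained from `f` by pinning `x_i := a`, `x_j := b`. -/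
def pin2 {n : ℕ} (f : (Fin n → Bool) → ℂ) (i j : Fin n) (a b : Bool)
    (y : {k : Fin n // k ≠ i ∧ k ≠ j} → Bool) : ℂ :=
  f fun k => if h : k = i then a else if h' : k = j then b else y ⟨k, h, h'⟩

/-- The signature obtained from `f` by pinning `x_i := a`, `x_j := b`, `x_k := c`. -/
def pin3 {n : ℕ} (f : (Fin n → Bool) → ℂ) (i j k : Fin n) (a b c : Bool)
    (y : {l : Fin n // l ≠ i ∧ l ≠ j ∧ l ≠ k} → Bool) : ℂ :=
  f fun l => if h1 : l = i then a else if h2 : l = j then b else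
    if h3 : l = k then c else y ⟨l, h1, h2, h3⟩

/-- The signature obtained from `f` by pinning `x_i := a`, `x_j := b`, `x_k := c`,
`x_l := d`. -/
def pin4 {n : ℕ} (f : (Fin n → Bool) → ℂ) (i j k l : Fin n) (a b c d : Bool)
    (y : {m : Fin n // m ≠ i ∧ m ≠ j ∧ m ≠ k ∧ m ≠ l} → Bool) : ℂ :=
  f fun m => if h1 : m = i then a else if h2 : m = j then b else
    if h3 : m = k then c else if h4 : m = l then d else y ⟨m, h1, h2, h3, h4⟩

/-- Arrow reversal symmetry: `conj (f α) = f ᾱ`. -/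
def ARS {n : ℕ} (f : (Fin n → Bool) → ℂ) : Prop :=
  ∀ x : Fin n → Bool, (starRingEnd ℂ) (f x) = f fun i => !(x i)

/-- Second order orthogonality with constant `lam`. -/
def SecondOrth {n : ℕ} (f : (Fin n → Bool) → ℂ) (lam : ℝ) : Prop :=
  lam ≠ 0 ∧
    ∀ i j : Fin n, i ≠ j →
      (∀ a b : Bool, (∑ y, Complex.normSq (pin2 f i j a b y)) = lam) ∧
      (∀ a b c d : Bool, (a, b) ≠ (c, d) →
        (∑ y, pin2 f i j a b y * (starRingEnd ℂ) (pin2 f i j c d y)) = 0)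

variable {ι M K : Type*} [DecidableEq ι]

lemma even_card_filter_ne_iff {i j k l : ι} (hij : i ≠ j) (hik : i ≠ k) (hil : i ≠ l)
    (hjk : j ≠ k) (hjl : j ≠ l) (hkl : k ≠ l) (a b : ι → Bool) :
    Even (({i, j, k, l} : Finset ι).filter fun m => a m ≠ b m).card ↔
      (a i ^^ a j ^^ a k ^^ a l) = (b i ^^ b j ^^ b k ^^ b l) := by
  rw [Finset.card_filter, Finset.sum_insert (by simp [*]), Finset.sum_insert (by simp [*]),
    Finset.sum_insert (by simp [*]), Finset.sum_singleton]
  generalize a i = a₁, a j = a₂, a k = a₃, a l = a₄, b i = b₁, b j = b₂, b k = b₃, b l = b₄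
  decide +revert

variable [Fintype ι]

/-- The subcube of `{0,1}^ι` on which the coordinates in `s` are pinned to their values in `a`.
The values of `a` outside `s` are irrelevant. -/
def cylinder (s : Finset ι) (a : ι → Bool) : Finset (ι → Bool) :=
  {x | ∀ i ∈ s, x i = a i}

/-- Every marginal of the weight `w` on exactly `m` coordinates takes the constant value `c`;
for probability weights this is `m`-wise uniformity. -/
def HasUniformMarginals [AddCommMonoid M] (w : (ι → Bool) → M) (m : ℕ) (c : M) : Prop :=
  ∀ s : Finset ι, s.card = m → ∀ a : ι → Bool, ∑ x ∈ cylinder s a, w x = c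

@[simp]
lemma mem_cylinder {s : Finset ι} {a x : ι → Bool} : x ∈ cylinder s a ↔ ∀ i ∈ s, x i = a i := by
  simp [cylinder]

lemma cylinder_congr {s : Finset ι} {a b : ι → Bool} (h : ∀ i ∈ s, a i = b i) :
    cylinder s a = cylinder s b := by
  ext x
  simp only [mem_cylinder]
  exact forall₂_congr fun i hi => by rw [h i hi]

section AddCommMonoid

variable [AddCommMonoid M]

lemma sum_cylinder_add_sum_cylinder_update (w : (ι → Bool) → M) {s : Finset ι} {i : ι}
    (hi : i ∈ s) (a : ι → Bool) :
    ∑ x ∈ cylinder s a, w x + ∑ x ∈ cylinder s (Function.update a i (!a i)), w x =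
      ∑ x ∈ cylinder (s.erase i) a, w x := by
  have agree : (cylinder (s.erase i) a).filter (fun x => x i = a i) = cylinder s a := by
    ext x
    simp only [Finset.mem_filter, mem_cylinder, Finset.mem_erase]
    grind
  have differ : (cylinder (s.erase i) a).filter (fun x => ¬x i = a i) =
      cylinder s (Function.update a i (!a i)) := by
    ext x
    simp only [Finset.mem_filter, mem_cylinder, Finset.mem_erase, Function.update_apply,
      ← Bool.eq_not]
    grind
  rw [← Finset.sum_filter_add_sum_filter_not (cylinder (s.erase i) a) (fun x => x i = a i),
    agree, differ]

lemma sum_cylinder_compl {w : (ι → Bool) → M} (hw : ∀ x, w xᶜ = w x) (s : Finset ι)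
    (a : ι → Bool) : ∑ x ∈ cylinder s aᶜ, w x = ∑ x ∈ cylinder s a, w x :=
  Finset.sum_bijective compl compl_bijective (fun x => by simp [Bool.not_eq_eq_eq_not])
    fun x _ => (hw x).symm

lemma sum_extend_eq_sum_cylinder (w : (ι → Bool) → M) {p : ι → Prop} [DecidablePred p]
    {s : Finset ι} (hp : ∀ i, p i ↔ i ∉ s) (a : ι → Bool) :
    ∑ y : {i // p i} → Bool, w (fun i => if h : p i then y ⟨i, h⟩ else a i) =
      ∑ x ∈ cylinder s a, w x := by
  refine Finset.sum_bij' (fun y _ i => if h : p i then y ⟨i, h⟩ else a i)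
    (fun x _ i => x i) ?_ ?_ ?_ ?_ ?_
  · intro y _
    simp +contextual [hp]
  · simp
  · intro y _
    funext i
    simp [i.2]
  · intro x hx
    funext i
    grind [mem_cylinder]
  · simp

end AddCommMonoid

namespace HasUniformMarginals

section AddCommGroup

variable [AddCommGroup M] {w : (ι → Bool) → M} {m : ℕ} {c : M} {s t : Finset ι}

lemma sum_cylinder_update (h : HasUniformMarginals w m c) (hs : s.card = m + 1) {i : ι}
    (hi : i ∈ s) (a : ι → Bool) :
    ∑ x ∈ cylinder s (Function.update a i (!a i)), w x = c - ∑ x ∈ cylinder s a, w x := by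
  have hcard : (s.erase i).card = m := by simp [Finset.card_erase_of_mem hi, hs]
  rw [← h _ hcard a, ← sum_cylinder_add_sum_cylinder_update w hi, add_sub_cancel_left]

lemma sum_cylinder_piecewise_compl (h : HasUniformMarginals w m c) (hs : s.card = m + 1)
    (hts : t ⊆ s) (a : ι → Bool) :
    ∑ x ∈ cylinder s (t.piecewise aᶜ a), w x =
      if Even t.card then ∑ x ∈ cylinder s a, w x else c - ∑ x ∈ cylinder s a, w x := by
  induction t using Finset.induction_on with
  | empty => simp
  | insert i t hit ih =>
    obtain ⟨his, hts⟩ := Finset.insert_subset_iff.mp hts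
    have flip : (insert i t).piecewise aᶜ a =
        Function.update (t.piecewise aᶜ a) i (!t.piecewise aᶜ a i) := by
      rw [Finset.piecewise_insert, Finset.piecewise_eq_of_notMem _ _ _ hit, Pi.compl_apply,
        Bool.compl_eq_bnot]
    rw [flip, h.sum_cylinder_update hs his, ih hts, Finset.card_insert_of_notMem hit]
    by_cases ht : Even t.card <;> simp [ht, Nat.even_add_one]

lemma sum_cylinder_eq_ite (h : HasUniformMarginals w m c) (hs : s.card = m + 1)
    (a b : ι → Bool) :
    ∑ x ∈ cylinder s b, w x =
      if Even (s.filter fun i => a i ≠ b i).card then ∑ x ∈ cylinder s a, w x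
      else c - ∑ x ∈ cylinder s a, w x := by
  rw [← h.sum_cylinder_piecewise_compl hs (Finset.filter_subset _ s) a]
  refine congrArg (∑ x ∈ ·, w x) (cylinder_congr fun i hi => ?_)
  by_cases hab : a i = b i
  · simp [Finset.piecewise, hab]
  · simpa [Finset.piecewise, hi, hab] using Bool.eq_not.mpr (Ne.symm hab)

end AddCommGroup

theorem succ_of_even [DivisionRing K] [NeZero (2 : K)] {w : (ι → Bool) → K} {m : ℕ} {c : K}
    (h : HasUniformMarginals w m c) (hm : Even m) (hw : ∀ x, w xᶜ = w x) :
    HasUniformMarginals w (m + 1) (c / 2) := by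
  intro s hs a
  have hodd : ¬Even (s.filter fun i => a i ≠ aᶜ i).card := by
    simpa [hs, Nat.even_add_one] using hm
  have hflip := h.sum_cylinder_eq_ite hs a aᶜ
  rw [if_neg hodd, sum_cylinder_compl hw] at hflip
  rw [eq_div_iff two_ne_zero, mul_two]
  exact eq_sub_iff_add_eq.mp hflip

end HasUniformMarginals

lemma ARS.normSq_compl {n : ℕ} {f : (Fin n → Bool) → ℂ} (hf : ARS f) (x : Fin n → Bool) :
    Complex.normSq (f xᶜ) = Complex.normSq (f x) :=
  (congrArg Complex.normSq (hf x)).symm.trans (Complex.normSq_conj _)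

section Pin

variable {n : ℕ} (f : (Fin n → Bool) → ℂ) {i j k l : Fin n} (x : Fin n → Bool)

lemma sum_normSq_pin2_eq_sum_cylinder :
    ∑ y, Complex.normSq (pin2 f i j (x i) (x j) y) =
      ∑ z ∈ cylinder {i, j} x, Complex.normSq (f z) := by
  rw [← sum_extend_eq_sum_cylinder _ (p := fun k => k ≠ i ∧ k ≠ j) (by simp)]
  exact Finset.sum_congr rfl fun y _ => congrArg (fun z => Complex.normSq (f z)) (by grind)

lemma sum_normSq_pin3_eq_sum_cylinder :
    ∑ y, Complex.normSq (pin3 f i j k (x i) (x j) (x k) y) =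
      ∑ z ∈ cylinder {i, j, k} x, Complex.normSq (f z) := by
  rw [← sum_extend_eq_sum_cylinder _ (p := fun l => l ≠ i ∧ l ≠ j ∧ l ≠ k) (by simp)]
  exact Finset.sum_congr rfl fun y _ => congrArg (fun z => Complex.normSq (f z)) (by grind)

lemma sum_normSq_pin4_eq_sum_cylinder :
    ∑ y, Complex.normSq (pin4 f i j k l (x i) (x j) (x k) (x l) y) =
      ∑ z ∈ cylinder {i, j, k, l} x, Complex.normSq (f z) := by
  rw [← sum_extend_eq_sum_cylinder _ (p := fun m => m ≠ i ∧ m ≠ j ∧ m ≠ k ∧ m ≠ l) (by simp)]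
  exact Finset.sum_congr rfl fun y _ => congrArg (fun z => Complex.normSq (f z)) (by grind)

end Pin

theorem secondOrth_consequences_general {n : ℕ} (f : (Fin n → Bool) → ℂ) (lam : ℝ)
    (hcompl : ∀ x, Complex.normSq (f xᶜ) = Complex.normSq (f x))
    (hpair : ∀ i j : Fin n, i ≠ j → ∀ a b : Bool,
      ∑ y, Complex.normSq (pin2 f i j a b y) = lam) :
    (∀ i j k : Fin n, i ≠ j → i ≠ k → j ≠ k → ∀ a b c : Bool,
      ∑ y, Complex.normSq (pin3 f i j k a b c y) = lam / 2) ∧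
    (∀ i j k l : Fin n, i ≠ j → i ≠ k → i ≠ l → j ≠ k → j ≠ l → k ≠ l →
      ∀ a b c d a' b' c' d' : Bool, (a ^^ b ^^ c ^^ d) = (a' ^^ b' ^^ c' ^^ d') →
        ∑ y, Complex.normSq (pin4 f i j k l a b c d y) =
          ∑ y, Complex.normSq (pin4 f i j k l a' b' c' d' y)) := by
  have hpairs : HasUniformMarginals (fun x => Complex.normSq (f x)) 2 lam := by
    intro s hs x
    obtain ⟨i, j, hij, rfl⟩ := Finset.card_eq_two.mp hs
    rw [← sum_normSq_pin2_eq_sum_cylinder, hpair i j hij]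
  have htriples := hpairs.succ_of_even even_two hcompl
  refine ⟨fun i j k hij hik hjk a b c => ?_,
    fun i j k l hij hik hil hjk hjl hkl a b c d a' b' c' d' hparity => ?_⟩
  · obtain ⟨x, rfl, rfl, rfl⟩ : ∃ x : Fin n → Bool, x i = a ∧ x j = b ∧ x k = c :=
      ⟨fun m => if m = i then a else if m = j then b else c, by grind⟩
    rw [sum_normSq_pin3_eq_sum_cylinder,
      htriples _ (Finset.card_eq_three.mpr ⟨i, j, k, hij, hik, hjk, rfl⟩)]
  · have exists_assignment (a b c d : Bool) :
        ∃ x : Fin n → Bool, x i = a ∧ x j = b ∧ x k = c ∧ x l = d :=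
      ⟨fun m => if m = i then a else if m = j then b else if m = k then c else d, by grind⟩
    obtain ⟨x, rfl, rfl, rfl, rfl⟩ := exists_assignment a b c d
    obtain ⟨x', rfl, rfl, rfl, rfl⟩ := exists_assignment a' b' c' d'
    have hcard : ({i, j, k, l} : Finset (Fin n)).card = 4 := by simp [*]
    rw [sum_normSq_pin4_eq_sum_cylinder, sum_normSq_pin4_eq_sum_cylinder,
      htriples.sum_cylinder_eq_ite hcard x' x, if_pos]
    exact (even_card_filter_ne_iff hij hik hil hjk hjl hkl x' x).mpr hparity.symm

/-- Let `f` (of arity `n ≥ 4`) satisfy ARS and second order orthogonality with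
constant `lam`.  Then (i) all triple pins have norm-square sum `lam / 2`, and (ii) for
pairwise distinct `i, j, k, l`, the norm-square sums of the quadruple pins indexed by
`{0000, 0011, 1100, 1111}` are all equal, and likewise those indexed by
`{0001, 0010, 1101, 1110}` are all equal. -/
theorem secondOrth_consequences (n : ℕ) (hn : 4 ≤ n) (f : (Fin n → Bool) → ℂ)
    (lam : ℝ) (hars : ARS f) (horth : SecondOrth f lam) :
    (∀ i j k : Fin n, i ≠ j → i ≠ k → j ≠ k → ∀ a b c : Bool,
      (∑ y, Complex.normSq (pin3 f i j k a b c y)) = lam / 2) ∧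
    (∀ i j k l : Fin n, i ≠ j → i ≠ k → i ≠ l → j ≠ k → j ≠ l → k ≠ l →
      ((∑ y, Complex.normSq (pin4 f i j k l false false false false y)) =
          (∑ y, Complex.normSq (pin4 f i j k l false false true true y)) ∧
        (∑ y, Complex.normSq (pin4 f i j k l false false false false y)) =
          (∑ y, Complex.normSq (pin4 f i j k l true true false false y)) ∧
        (∑ y, Complex.normSq (pin4 f i j k l false false false false y)) =
          (∑ y, Complex.normSq (pin4 f i j k l true true true true y))) ∧
      ((∑ y, Complex.normSq (pin4 f i j k l false false false true y)) =
          (∑ y, Complex.normSq (pin4 f i j k l false false true false y)) ∧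
        (∑ y, Complex.normSq (pin4 f i j k l false false false true y)) =
          (∑ y, Complex.normSq (pin4 f i j k l true true false true y)) ∧
        (∑ y, Complex.normSq (pin4 f i j k l false false false true y)) =
          (∑ y, Complex.normSq (pin4 f i j k l true true true false y)))) := by
  obtain ⟨htriple, hquad⟩ := secondOrth_consequences_general f lam hars.normSq_compl
    fun i j hij => (horth.2 i j hij).1
  refine ⟨htriple, fun i j k l hij hik hil hjk hjl hkl => ⟨⟨?_, ?_, ?_⟩, ?_, ?_, ?_⟩⟩ <;>
    exact hquad i j k l hij hik hil hjk hjl hkl _ _ _ _ _ _ _ _ rfl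

end Stmt14
end

section
/- Let 2n ≥ 4, let a ∈ ℂ, let i ≠ j be indices in {1, …, 2n}, and let g be a nonzero EO signature of arity 2n − 2 on the variables other than x_i, x_j. Define f : {0,1}^{2n} → ℂ by f(x) = a·[x = 0^{2n}] + conj(a)·[x = 1^{2n}] + [x_i ≠ x_j]·g(x restricted to the other variables). If f is irreducible, then f does not satisfy second order orthogonality. -/
namespace Stmt16

/-- The Hamming weight of an assignment. -/
def hw {ι : Type*} [Fintype ι] (x : ι → Bool) : ℕ :=
  (Finset.univ.filter fun i => x i = true).card

/-- The signature obtained from `f` by pinning `x_i := a`, `x_j := b`. -/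
def pin2 {n : ℕ} (f : (Fin n → Bool) → ℂ) (i j : Fin n) (a b : Bool)
    (y : {k : Fin n // k ≠ i ∧ k ≠ j} → Bool) : ℂ :=
  f fun k => if h : k = i then a else if h' : k = j then b else y ⟨k, h, h'⟩

/-- Second order orthogonality with constant `lam`. -/
def SecondOrth {n : ℕ} (f : (Fin n → Bool) → ℂ) (lam : ℝ) : Prop :=
  lam ≠ 0 ∧
    ∀ i j : Fin n, i ≠ j →
      (∀ a b : Bool, (∑ y, Complex.normSq (pin2 f i j a b y)) = lam) ∧
      (∀ a b c d : Bool, (a, b) ≠ (c, d) →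
        (∑ y, pin2 f i j a b y * (starRingEnd ℂ) (pin2 f i j c d y)) = 0)

/-- A signature is reducible if it is a (pointwise) product of a signature on a
nonempty proper subset `S` of its variables and a signature on the complement. -/
def Reducible {n : ℕ} (f : (Fin n → Bool) → ℂ) : Prop :=
  ∃ S : Finset (Fin n), S.Nonempty ∧ S ≠ Finset.univ ∧
    ∃ (g : ({k : Fin n // k ∈ S} → Bool) → ℂ)
      (h : ({k : Fin n // k ∉ S} → Bool) → ℂ),
      ∀ x : Fin n → Bool, f x = g (fun k => x k.1) * h (fun k => x k.1)

section

theorem not_forall_eq_of_apply_ne {α β : Type*} {x : α → β} {i j : α} (hx : x i ≠ x j) (c : β) :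
    ¬ ∀ k, x k = c :=
  fun hc => hx ((hc i).trans (hc j).symm)

variable {n : ℕ} {f : (Fin n → Bool) → ℂ} {i j : Fin n}

theorem SecondOrth.pin2_ne_pin2 {lam : ℝ} (h : SecondOrth f lam) (hij : i ≠ j)
    {a b c d : Bool} (hne : (a, b) ≠ (c, d)) : pin2 f i j a b ≠ pin2 f i j c d := by
  intro heq
  obtain ⟨hnorm, horth⟩ := h.2 i j hij
  have hlam : (lam : ℂ) = 0 := calc
    (lam : ℂ) = ∑ y, (Complex.normSq (pin2 f i j a b y) : ℂ) := by
      rw [← hnorm a b, Complex.ofReal_sum]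
    _ = ∑ y, pin2 f i j a b y * (starRingEnd ℂ) (pin2 f i j c d y) := by
      simp only [← heq, Complex.mul_conj]
    _ = 0 := horth a b c d hne
  exact h.1 (Complex.ofReal_eq_zero.mp hlam)

theorem pin2_eq_of_forall_ne {g : ({k : Fin n // k ≠ i ∧ k ≠ j} → Bool) → ℂ} (hij : i ≠ j)
    (hf : ∀ x, x i ≠ x j → f x = g fun k => x k.1) {b c : Bool} (hbc : b ≠ c) :
    pin2 f i j b c = g := by
  funext y
  rw [pin2, hf _ (by simpa [hij.symm] using hbc)]
  congr 1
  funext k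
  rw [dif_neg k.2.1, dif_neg k.2.2]

theorem eo_plus_endpoints_not_secondOrth_general
    (g : ({k : Fin n // k ≠ i ∧ k ≠ j} → Bool) → ℂ) (hij : i ≠ j)
    (hf : ∀ x, x i ≠ x j → f x = g fun k => x k.1) : ¬ ∃ lam : ℝ, SecondOrth f lam := by
  rintro ⟨lam, h⟩
  have h01 : pin2 f i j false true = g := pin2_eq_of_forall_ne hij hf Bool.false_ne_true
  have h10 : pin2 f i j true false = g := pin2_eq_of_forall_ne hij hf Bool.false_ne_true.symm
  exact h.pin2_ne_pin2 hij (by decide) (h01.trans h10.symm)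

end

/-- Let `2n ≥ 4`, `a ∈ ℂ`, let `i ≠ j` and let `g` be a nonzero EO signature of arity
`2n - 2` on the variables other than `x_i, x_j`.  If
`f = a·[x = 0⃗] + conj(a)·[x = 1⃗] + [x_i ≠ x_j]·g` is irreducible, then `f` does not
satisfy second order orthogonality. -/
theorem eo_plus_endpoints_not_secondOrth (n : ℕ) (hn : 2 ≤ n) (a : ℂ)
    (i j : Fin (2 * n)) (hij : i ≠ j)
    (g : ({k : Fin (2 * n) // k ≠ i ∧ k ≠ j} → Bool) → ℂ)
    (hgEO : ∀ y, g y ≠ 0 → hw y = n - 1)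
    (hgne : ∃ y, g y ≠ 0)
    (f : (Fin (2 * n) → Bool) → ℂ)
    (hf : ∀ x : Fin (2 * n) → Bool,
      f x = (if ∀ k, x k = false then a else 0) +
        (if ∀ k, x k = true then (starRingEnd ℂ) a else 0) +
        (if x i ≠ x j then 1 else 0) * g (fun k => x k.1))
    (hirr : ¬ Reducible f) :
    ¬ ∃ lam : ℝ, SecondOrth f lam := by
  refine eo_plus_endpoints_not_secondOrth_general g hij fun x hx => ?_
  simp only [hf, not_forall_eq_of_apply_ne hx, if_false, if_pos hx, zero_add, one_mul]

end Stmt16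
end

section
/- Let f be a signature in D^⊗ of arity 2n ≥ 6, and let i, j, u, v, s, t be indices with {u, v} ≠ {s, t}, {i, j} ∩ {u, v} = ∅ and {i, j} ∩ {s, t} = ∅. If (≠_2)(x_i, x_j) divides ∂_{uv} f and (≠_2)(x_i, x_j) divides ∂_{st} f, then (≠_2)(x_i, x_j) divides f. -/
namespace Stmt17

/-- The merge `∂_{ij} f = f^{01}_{ij} + f^{10}_{ij}` of `f` at `i, j` via the binary
disequality, a signature on the remaining variables. -/
def merge {ι : Type*} [DecidableEq ι] (f : (ι → Bool) → ℂ) (i j : ι)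
    (y : {k : ι // k ≠ i ∧ k ≠ j} → Bool) : ℂ :=
  f (fun k => if h : k = i then false else if h' : k = j then true else y ⟨k, h, h'⟩) +
    f (fun k => if h : k = i then true else if h' : k = j then false else y ⟨k, h, h'⟩)

/-- `f ∈ D^⊗`: `f` is a nonzero real multiple of a tensor product of binary
disequalities, i.e. there are `λ ∈ ℝ \ {0}` and a partition of the variables into
pairs (a fixed-point-free involution `p`) with `f x = λ` when `x` disagrees on every
pair and `f x = 0` otherwise. -/
def DTensor {ι : Type*} [Fintype ι] (f : (ι → Bool) → ℂ) : Prop :=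
  ∃ lam : ℝ, lam ≠ 0 ∧ ∃ p : Equiv.Perm ι,
    (∀ k, p (p k) = k) ∧ (∀ k, p k ≠ k) ∧
    ∀ x : ι → Bool, f x = if ∀ k, x k ≠ x (p k) then (lam : ℂ) else 0

/-- `(≠₂)(x_i, x_j)` divides the signature `h`: `h` factors as the binary disequality
on `x_i, x_j` tensored with a signature on the remaining variables. -/
def NeqDvd {ι : Type*} (i j : ι) (h : (ι → Bool) → ℂ) : Prop :=
  ∃ g : ({k : ι // k ≠ i ∧ k ≠ j} → Bool) → ℂ,
    ∀ x : ι → Bool, h x = (if x i ≠ x j then 1 else 0) * g (fun k => x k.1)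

/-!
Let `p` be the involution pairing the variables of `f`, so that, up to a nonzero scalar, `f` is the
indicator of the assignments `x` with `x k ≠ x (p k)` for all `k`; then `(≠₂)(x_i, x_j)` divides
`f` as soon as `p i = j`. All nonzero values of `f` are equal, so no cancellation occurs in
`∂_{uv} f`, and if `(≠₂)(x_i, x_j)` divides it, then every `x` in the support of `f` with
`x u ≠ x v` has `x i ≠ x j`. Suppose `p i ≠ j`. Then some `x` in the support has `x i = x j`, hence
`x u = x v`. Flipping the values of `x` at `u` and `p u` stays in the support and breaks the second
equality, so it must break the first one too: `p u ∈ {i, j}`. Likewise `p v ∈ {i, j}`, so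
`{u, v} = {p i, p j}`, and in the same way `{s, t} = {p i, p j}`.
-/

section Separates

variable {ι : Type*} {p : ι → ι} {x : ι → Bool} {i j u v : ι}

/-- The assignment `x` satisfies every disequality `x_k ≠ x_{p k}`; for an involution `p` pairing up
the variables, these `x` are the support of the corresponding tensor product of `≠₂`. -/
def Separates (p : ι → ι) (x : ι → Bool) : Prop :=
  ∀ k, x k ≠ x (p k)

theorem exists_separates (hp : Function.Involutive p) (hne : ∀ k, p k ≠ k) :
    ∃ x, Separates p x := by
  let _ : LinearOrder ι := IsWellOrder.linearOrder WellOrderingRel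
  refine ⟨fun k ↦ decide (k < p k), fun k ↦ ?_⟩
  rcases (hne k).lt_or_gt with h | h <;> simp [hp k, h, h.le]

/- On a separating assignment, swapping `w` and `p w` flips the values at both indices. -/
theorem Separates.comp_swap [DecidableEq ι] (hp : Function.Involutive p) (hx : Separates p x)
    (w : ι) : Separates p (x ∘ Equiv.swap w (p w)) := by
  intro k
  have hcomm : Equiv.swap w (p w) (p k) = p (Equiv.swap w (p w) k) := by
    rw [hp.injective.map_swap, hp w, Equiv.swap_comm]
  simpa only [Function.comp_apply, hcomm] using hx (Equiv.swap w (p w) k)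

theorem separates_comp_swap_iff [DecidableEq ι] (hp : Function.Involutive p) (w : ι) :
    Separates p (x ∘ Equiv.swap w (p w)) ↔ Separates p x := by
  refine ⟨fun h ↦ ?_, fun h ↦ h.comp_swap hp w⟩
  simpa [Function.comp_assoc, ← Equiv.coe_trans] using h.comp_swap hp w

theorem exists_separates_apply_eq (hp : Function.Involutive p) (hne : ∀ k, p k ≠ k)
    (hij : p i ≠ j) : ∃ x, Separates p x ∧ x i = x j := by
  classical
  obtain ⟨x, hx⟩ := exists_separates hp hne
  by_cases hxij : x i = x j
  · exact ⟨x, hx, hxij⟩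
  · refine ⟨x ∘ Equiv.swap i (p i), hx.comp_swap hp i, ?_⟩
    have hji : j ≠ i := by rintro rfl; exact hxij rfl
    simpa [Equiv.swap_apply_of_ne_of_ne hji hij.symm] using
      (Bool.eq_not.2 (hx i).symm).trans (Bool.eq_not.2 (Ne.symm hxij)).symm

theorem apply_eq_or_apply_eq_of_separates (hp : Function.Involutive p) (hne : ∀ k, p k ≠ k)
    (hij : p i ≠ j) (huv : u ≠ v) (hiu : i ≠ u) (hju : j ≠ u)
    (h : ∀ x, Separates p x → x i = x j → x u = x v) : p u = i ∨ p u = j := by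
  classical
  by_contra! ⟨hpui, hpuj⟩
  obtain ⟨x, hx, hxij⟩ := exists_separates_apply_eq hp hne hij
  have hxuv : x u = x v := h x hx hxij
  have hvpu : v ≠ p u := by rintro rfl; exact hx u hxuv
  have hflip : x (p u) = x v := by
    simpa [Equiv.swap_apply_of_ne_of_ne, huv.symm, hvpu, hiu, hju, hpui.symm, hpuj.symm, hxij]
      using h _ (hx.comp_swap hp u)
  exact hx u (hxuv.trans hflip.symm)

theorem pair_apply_eq_of_separates [DecidableEq ι] (hp : Function.Involutive p)
    (hne : ∀ k, p k ≠ k) (hij : p i ≠ j) (huv : u ≠ v)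
    (hiu : i ≠ u) (hiv : i ≠ v) (hju : j ≠ u) (hjv : j ≠ v)
    (h : ∀ x, Separates p x → x i = x j → x u = x v) : ({p u, p v} : Finset ι) = {i, j} := by
  have hpuv : p u ≠ p v := hp.injective.ne huv
  rcases apply_eq_or_apply_eq_of_separates hp hne hij huv hiu hju h with hu | hu <;>
    rcases apply_eq_or_apply_eq_of_separates hp hne hij huv.symm hiv hjv
      (fun x hx hxij ↦ (h x hx hxij).symm) with hv | hv
  · exact absurd (hu.trans hv.symm) hpuv
  · rw [hu, hv]
  · rw [hu, hv, Finset.pair_comm]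
  · exact absurd (hu.trans hv.symm) hpuv

end Separates

section Merge

variable {ι : Type*} {h : (ι → Bool) → ℂ} {x : ι → Bool} {i j : ι}

theorem NeqDvd.apply_eq_zero (hdvd : NeqDvd i j h) (hx : x i = x j) : h x = 0 := by
  obtain ⟨g, hg⟩ := hdvd
  simp [hg, hx]

variable [DecidableEq ι]

theorem merge_restrict (h : (ι → Bool) → ℂ) (hx : x i ≠ x j) :
    merge h i j (fun k ↦ x k) = h x + h (x ∘ Equiv.swap i j) := by
  have hextend (a b : Bool) (y : ι → Bool) (hi : y i = a) (hj : y j = b)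
      (hy : ∀ k, k ≠ i → k ≠ j → y k = x k) :
      (fun k ↦ if k = i then a else if k = j then b else x k) = y := by
    grind
  have hswap (k : ι) (hki : k ≠ i) (hkj : k ≠ j) : (x ∘ Equiv.swap i j) k = x k := by
    simp [Equiv.swap_apply_of_ne_of_ne hki hkj]
  simp only [merge, dite_eq_ite]
  cases hi : x i <;> cases hj : x j
  · simp [hi, hj] at hx
  · rw [hextend _ _ x hi hj (by simp), hextend _ _ _ (by simp [hj]) (by simp [hi]) hswap]
  · rw [hextend _ _ x hi hj (by simp), hextend _ _ _ (by simp [hj]) (by simp [hi]) hswap, add_comm]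
  · simp [hi, hj] at hx

/- The cofactor of a signature divisible by `≠₂` is half its merge. -/
theorem neqDvd_of_comp_swap (hzero : ∀ x, x i = x j → h x = 0)
    (hswap : ∀ x, h (x ∘ Equiv.swap i j) = h x) : NeqDvd i j h := by
  refine ⟨fun y ↦ merge h i j y / 2, fun x ↦ ?_⟩
  by_cases hx : x i = x j
  · simp [hx, hzero x hx]
  · simp [hx, merge_restrict h hx, hswap]

end Merge

section PairingTensor

variable {ι : Type*} {p : ι → ι} {c : ℂ} {i j u v : ι}

open Classical in
/-- The tensor product of the binary disequalities `≠₂(x_k, x_{p k})` over the pairs `{k, p k}` of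
an involution `p`, scaled by `c`, in closed form: it is `c` times the indicator of `Separates p`. -/
noncomputable def pairingTensor (p : ι → ι) (c : ℂ) (x : ι → Bool) : ℂ :=
  if Separates p x then c else 0

theorem DTensor.exists_eq_pairingTensor [Fintype ι] {f : (ι → Bool) → ℂ} (hf : DTensor f) :
    ∃ (p : ι → ι) (c : ℂ), Function.Involutive p ∧ (∀ k, p k ≠ k) ∧ c ≠ 0 ∧
      f = pairingTensor p c := by
  obtain ⟨lam, hlam, p, hp, hne, hf⟩ := hf
  refine ⟨p, lam, hp, hne, by exact_mod_cast hlam, funext fun x ↦ ?_⟩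
  simp only [hf, pairingTensor, Separates]
  congr

theorem neqDvd_pairingTensor (hp : Function.Involutive p) (c : ℂ) (i : ι) :
    NeqDvd i (p i) (pairingTensor p c) := by
  classical
  refine neqDvd_of_comp_swap (fun x hx ↦ ?_) (fun x ↦ ?_)
  · exact if_neg fun hsep ↦ hsep i hx
  · simp only [pairingTensor, separates_comp_swap_iff hp]

variable [DecidableEq ι]

theorem merge_pairingTensor_ne_zero (hc : c ≠ 0) {x : ι → Bool} (hx : Separates p x)
    (hxuv : x u ≠ x v) : merge (pairingTensor p c) u v (fun k ↦ x k) ≠ 0 := by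
  have hfx : pairingTensor p c x = c := if_pos hx
  rw [merge_restrict _ hxuv, hfx, pairingTensor]
  split_ifs <;> simpa [← two_mul] using hc

theorem pair_apply_eq_of_neqDvd_merge (hp : Function.Involutive p) (hne : ∀ k, p k ≠ k)
    (hc : c ≠ 0) (hij : p i ≠ j) (huv : u ≠ v)
    (hiu : i ≠ u) (hiv : i ≠ v) (hju : j ≠ u) (hjv : j ≠ v)
    (hdvd : NeqDvd (⟨i, hiu, hiv⟩ : {k : ι // k ≠ u ∧ k ≠ v}) ⟨j, hju, hjv⟩
      (merge (pairingTensor p c) u v)) :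
    ({p u, p v} : Finset ι) = {i, j} := by
  refine pair_apply_eq_of_separates hp hne hij huv hiu hiv hju hjv fun x hx hxij ↦ ?_
  by_contra hxuv
  exact merge_pairingTensor_ne_zero hc hx hxuv (hdvd.apply_eq_zero hxij)

end PairingTensor

theorem dTensor_neqDvd_of_two_merges_general {ι : Type*} [Fintype ι] [DecidableEq ι]
    {f : (ι → Bool) → ℂ} (hf : DTensor f) {i j u v s t : ι} (huv : u ≠ v) (hst : s ≠ t)
    (hpairs : ({u, v} : Finset ι) ≠ {s, t})
    (hiu : i ≠ u) (hiv : i ≠ v) (hju : j ≠ u) (hjv : j ≠ v)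
    (his : i ≠ s) (hit : i ≠ t) (hjs : j ≠ s) (hjt : j ≠ t)
    (hdvd1 : NeqDvd (⟨i, hiu, hiv⟩ : {k : ι // k ≠ u ∧ k ≠ v}) ⟨j, hju, hjv⟩ (merge f u v))
    (hdvd2 : NeqDvd (⟨i, his, hit⟩ : {k : ι // k ≠ s ∧ k ≠ t}) ⟨j, hjs, hjt⟩ (merge f s t)) :
    NeqDvd i j f := by
  obtain ⟨p, c, hp, hne, hc, rfl⟩ := hf.exists_eq_pairingTensor
  by_cases hij : p i = j
  · exact hij ▸ neqDvd_pairingTensor hp c i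
  · have hpuv := pair_apply_eq_of_neqDvd_merge hp hne hc hij huv hiu hiv hju hjv hdvd1
    have hpst := pair_apply_eq_of_neqDvd_merge hp hne hc hij hst his hit hjs hjt hdvd2
    refine absurd (Finset.image_injective hp.injective ?_) hpairs
    simp only [Finset.image_insert, Finset.image_singleton, hpuv, hpst]

/-- Let `f ∈ D^⊗` have arity `2n ≥ 6` and let `{u,v} ≠ {s,t}` be pairs of indices,
both disjoint from `{i,j}`.  If `(≠₂)(x_i, x_j)` divides both `∂_{uv} f` and
`∂_{st} f`, then `(≠₂)(x_i, x_j)` divides `f`. -/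
theorem dTensor_neqDvd_of_two_merges (n : ℕ) (hn : 3 ≤ n)
    (f : (Fin (2 * n) → Bool) → ℂ) (hf : DTensor f)
    (i j u v s t : Fin (2 * n))
    (hij : i ≠ j) (huv : u ≠ v) (hst : s ≠ t)
    (hpairs : ({u, v} : Finset (Fin (2 * n))) ≠ {s, t})
    (hiu : i ≠ u) (hiv : i ≠ v) (hju : j ≠ u) (hjv : j ≠ v)
    (his : i ≠ s) (hit : i ≠ t) (hjs : j ≠ s) (hjt : j ≠ t)
    (hdvd1 : NeqDvd (⟨i, hiu, hiv⟩ : {k : Fin (2 * n) // k ≠ u ∧ k ≠ v})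
      ⟨j, hju, hjv⟩ (merge f u v))
    (hdvd2 : NeqDvd (⟨i, his, hit⟩ : {k : Fin (2 * n) // k ≠ s ∧ k ≠ t})
      ⟨j, hjs, hjt⟩ (merge f s t)) :
    NeqDvd i j f :=
  dTensor_neqDvd_of_two_merges_general hf huv hst hpairs hiu hiv hju hjv his hit hjs hjt
    hdvd1 hdvd2

end Stmt17
end

section
/- Let f be an EO signature of arity 2n ≥ 10 satisfying ARS. If the merge ∂_{ij} f lies in D^⊗ for every pair of distinct indices {i, j}, then f itself lies in D^⊗. -/
namespace Stmt18

/-- The Hamming weight of an assignment. -/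
def hw {ι : Type*} [Fintype ι] (x : ι → Bool) : ℕ :=
  (Finset.univ.filter fun i => x i = true).card

/-- The merge `∂_{ij} f = f^{01}_{ij} + f^{10}_{ij}` of `f` at `i, j` via the binary
disequality, a signature on the remaining variables. -/
def merge {ι : Type*} [DecidableEq ι] (f : (ι → Bool) → ℂ) (i j : ι)
    (y : {k : ι // k ≠ i ∧ k ≠ j} → Bool) : ℂ :=
  f (fun k => if h : k = i then false else if h' : k = j then true else y ⟨k, h, h'⟩) +
    f (fun k => if h : k = i then true else if h' : k = j then false else y ⟨k, h, h'⟩)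

/-- Arrow reversal symmetry: `conj (f α) = f ᾱ`. -/
def ARS {ι : Type*} (f : (ι → Bool) → ℂ) : Prop :=
  ∀ x : ι → Bool, (starRingEnd ℂ) (f x) = f fun i => !(x i)

/-- `f ∈ D^⊗`: `f` is a nonzero real multiple of a tensor product of binary
disequalities, i.e. there are `λ ∈ ℝ \ {0}` and a partition of the variables into
pairs (a fixed-point-free involution `p`) with `f x = λ` when `x` disagrees on every
pair and `f x = 0` otherwise. -/
def DTensor {ι : Type*} [Fintype ι] (f : (ι → Bool) → ℂ) : Prop :=
  ∃ lam : ℝ, lam ≠ 0 ∧ ∃ p : Equiv.Perm ι,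
    (∀ k, p (p k) = k) ∧ (∀ k, p k ≠ k) ∧
    ∀ x : ι → Bool, f x = if ∀ k, x k ≠ x (p k) then (lam : ℂ) else 0

/-!
Where `x i ≠ x j`, the merge `∂_{ij} f` evaluates to `f x + f (x ∘ swap i j)`, so a merge can be
studied on all variables at once. Merging a tensor product of disequalities along `p` at `k, l`
gives, up to a factor `2` exactly when `p` already pairs `k` with `l`, the tensor product along the
pairing that joins `k` to `l` and their former partners to each other.

Let `∂_{ij} f` have a coefficient `c` of maximal modulus and pairing `M`, where `M i = j`. Merging
twice at disjoint pairs in either order yields the same signature. Comparing `∂_{ij} f` with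
`∂_{a, M a} f` in this way, the factor `2` arises from `∂_{ij} f`, and maximality of `c` forces it
to arise from `∂_{a, M a} f` too, so the latter also has coefficient `c` and pairing `M`. Comparing
these with `∂_{ab} f` determines all merges, provided some pair of `M` is also a pair of `∂_{ab} f`;
more than eight variables leave room for such a pair. Hence `f` and `(c / 2) ⨂ (≠₂)` along `M` have
the same merges. A signature with zero merges changes sign when two differing entries are swapped;
as the entries are Boolean, three such swaps restore a nonconstant assignment, so that signature
vanishes there.
-/

open Equiv

lemma comp_swap_eq_self {α β : Type*} [DecidableEq α] {x : α → β} {a b : α} (h : x a = x b) :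
    x ∘ swap a b = x :=
  funext (apply_swap_eq_self h)

lemma eq_zero_of_comp_swap_eq_neg {ι A : Type*} [DecidableEq ι] [Fintype ι] [AddGroup A]
    [IsAddTorsionFree A] (hcard : 2 < Fintype.card ι) {g : (ι → Bool) → A}
    (hconst : ∀ b, g (fun _ => b) = 0)
    (hswap : ∀ a b x, x a ≠ x b → g (x ∘ swap a b) = -g x) : g = 0 := by
  ext x
  obtain ⟨a, c, hac, hxac⟩ := Fintype.exists_ne_map_eq_of_card_lt x (by simpa using hcard)
  by_cases hx : ∀ b, x b = x a
  · rw [funext hx, hconst, Pi.zero_apply]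
  push Not at hx
  obtain ⟨b, hb⟩ := hx
  have hba : b ≠ a := ne_of_apply_ne x hb
  have hbc : b ≠ c := ne_of_apply_ne x (hxac ▸ hb)
  have hperm : swap a b * swap a c * swap b c = swap a c := by
    rw [mul_assoc, mul_swap_eq_swap_mul (swap a c), swap_apply_of_ne_of_ne hba hbc,
      swap_apply_right, swap_comm b a, swap_mul_self_mul]
  have hrestore : ((x ∘ swap a b) ∘ swap a c) ∘ swap b c = x := by
    rw [Function.comp_assoc, Function.comp_assoc, ← Perm.coe_mul, ← Perm.coe_mul, ← mul_assoc,
      hperm, comp_swap_eq_self hxac]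
  rw [Pi.zero_apply, ← self_eq_neg]
  nth_rw 1 [← hrestore]
  rw [hswap b c, hswap a c, hswap a b, neg_neg]
  · exact hb.symm
  · simpa [swap_apply_of_ne_of_ne hac.symm hbc.symm, ← hxac] using hb
  · simpa [swap_apply_of_ne_of_ne hba hbc, swap_apply_of_ne_of_ne hac.symm hbc.symm] using hb.symm

lemma hw_const {ι : Type*} [Fintype ι] (b : Bool) :
    hw (fun _ : ι => b) = if b then Fintype.card ι else 0 := by
  cases b <;> simp [hw]

section Pairing

variable {ι : Type*} {p : Perm ι}

/-- A partition of `ι` into pairs, encoded as the fixed-point-free involution exchanging the two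
elements of each pair. -/
structure IsPairing (p : Perm ι) : Prop where
  involutive : Function.Involutive p
  apply_ne : ∀ k, p k ≠ k

lemma IsPairing.conj (hp : IsPairing p) (σ : Perm ι) : IsPairing (σ * p * σ⁻¹) where
  involutive k := by simp [hp.involutive _]
  apply_ne k h := hp.apply_ne (σ⁻¹ k) (Perm.eq_inv_iff_eq.mpr h)

lemma IsPairing.exists_forall_apply_ne (hp : IsPairing p) : ∃ x : ι → Bool, ∀ k, x k ≠ x (p k) := by
  classical
  let _ : LinearOrder ι := linearOrderOfSTO WellOrderingRel
  refine ⟨fun k => decide (k < p k), fun k => ?_⟩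
  rcases (hp.apply_ne k).lt_or_gt with h | h <;> simp [hp.involutive k, h, h.not_gt]

variable [DecidableEq ι] {k l m : ι}

lemma IsPairing.swap_conj_eq_self (hp : IsPairing p) (k : ι) :
    swap k (p k) * p * (swap k (p k))⁻¹ = p := by
  rw [mul_inv_eq_iff_eq_mul, mul_swap_eq_swap_mul, hp.involutive k, swap_comm]

/-- The pairing left by merging `p` at `k` and `l`: it pairs `k` with `l` and, unless `p` already
does so, their former partners with each other. Conjugation by a transposition makes both cases
uniform. -/
def rematch (p : Perm ι) (k l : ι) : Perm ι := swap (p k) l * p * (swap (p k) l)⁻¹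

lemma isPairing_rematch (hp : IsPairing p) (k l : ι) : IsPairing (rematch p k l) := hp.conj _

lemma rematch_of_apply_eq (h : p k = l) : rematch p k l = p := by
  simp [rematch, h, ← Perm.one_def]

lemma rematch_apply_left (hp : IsPairing p) (hkl : k ≠ l) : rematch p k l k = l := by
  simp [rematch, swap_apply_of_ne_of_ne (hp.apply_ne k).symm hkl]

lemma rematch_apply_of_ne (hp : IsPairing p) (hk : m ≠ k) (hl : m ≠ l) (hpk : p m ≠ k)
    (hpl : p m ≠ l) : rematch p k l m = p m := by
  have hm : m ≠ p k := fun h => hpk (hp.involutive.eq_iff.mpr h)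
  simp [rematch, swap_apply_of_ne_of_ne hm hl, swap_apply_of_ne_of_ne (p.injective.ne hk) hpl]

end Pairing

section DiseqTensor

variable {ι : Type*} {p q : Perm ι} {x : ι → Bool}

open Classical in
/-- The tensor product of the binary disequalities on the pairs `{k, p k}`. -/
noncomputable def diseqTensor (p : Perm ι) (x : ι → Bool) : ℂ :=
  if ∀ k, x k ≠ x (p k) then 1 else 0

lemma diseqTensor_eq_one (h : ∀ k, x k ≠ x (p k)) : diseqTensor p x = 1 := if_pos h

lemma diseqTensor_eq_zero {k : ι} (h : x k = x (p k)) : diseqTensor p x = 0 :=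
  if_neg fun H => H k h

lemma diseqTensor_comp (p σ : Perm ι) (x : ι → Bool) :
    diseqTensor p (x ∘ σ) = diseqTensor (σ * p * σ⁻¹) x := by
  have hiff : (∀ k, x (σ k) ≠ x (σ (p k))) ↔ ∀ k, x k ≠ x ((σ * p * σ⁻¹) k) := by
    simpa using σ.forall_congr_right (q := fun k => x k ≠ x ((σ * p * σ⁻¹) k))
  unfold diseqTensor
  congr 1
  exact propext hiff

lemma IsPairing.diseqTensor_comp_swap [DecidableEq ι] (hp : IsPairing p) (k : ι) (x : ι → Bool) :
    diseqTensor p (x ∘ swap k (p k)) = diseqTensor p x := by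
  rw [diseqTensor_comp, hp.swap_conj_eq_self]

lemma IsPairing.diseqTensor_add_comp_swap [DecidableEq ι] (hp : IsPairing p) {k l : ι}
    (hx : x k ≠ x l) :
    diseqTensor p x + diseqTensor p (x ∘ swap k l) =
      (if p k = l then 2 else 1) * diseqTensor (rematch p k l) x := by
  have hkl : k ≠ l := ne_of_apply_ne x hx
  split_ifs with hpk
  · rw [rematch_of_apply_eq hpk, ← hpk, hp.diseqTensor_comp_swap, two_mul]
  rw [rematch, ← diseqTensor_comp, one_mul]
  by_cases hxk : x k = x (p k)
  · have hswap : x ∘ swap (p k) l = (x ∘ swap k l) ∘ swap k (p k) := by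
      nth_rw 1 [← comp_swap_eq_self hxk]
      rw [Function.comp_assoc, Function.comp_assoc, ← Perm.coe_mul, ← Perm.coe_mul,
        mul_swap_eq_swap_mul]
      simp [swap_apply_of_ne_of_ne, hkl.symm, Ne.symm hpk]
    rw [hswap, hp.diseqTensor_comp_swap, diseqTensor_eq_zero hxk, zero_add]
  · have hxl : x (p k) = x l :=
      (Bool.eq_not.mpr (Ne.symm hxk)).trans (Bool.eq_not.mpr hx.symm).symm
    have hzero : diseqTensor p (x ∘ swap k l) = 0 :=
      diseqTensor_eq_zero (k := k) (by
        simp [swap_apply_of_ne_of_ne (hp.apply_ne k) hpk, hxl])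
    rw [comp_swap_eq_self hxl, hzero, add_zero]

lemma IsPairing.exists_forall_apply_ne_and_eq (hp : IsPairing p) {a b : ι} (hab : b ≠ p a) :
    ∃ x : ι → Bool, (∀ k, x k ≠ x (p k)) ∧ x a = x b := by
  classical
  obtain ⟨y, hy⟩ := hp.exists_forall_apply_ne
  by_cases hyab : y a = y b
  · exact ⟨y, hy, hyab⟩
  have ha : a ≠ b := ne_of_apply_ne y hyab
  have ha' : a ≠ p b := fun h => hab (hp.involutive.eq_iff.mp h.symm)
  refine ⟨y ∘ swap b (p b), fun k => ?_, ?_⟩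
  · have hcomm := mul_inv_eq_iff_eq_mul.mp (hp.swap_conj_eq_self b)
    have := hy (swap b (p b) k)
    rwa [← Perm.mul_apply, ← hcomm, Perm.mul_apply] at this
  · rw [Function.comp_apply, Function.comp_apply, swap_apply_of_ne_of_ne ha ha', swap_apply_left]
    exact (Bool.eq_not.mpr hyab).trans (Bool.eq_not.mpr (hy b).symm).symm

lemma IsPairing.eq_and_eq_of_mul_diseqTensor_eq (hp : IsPairing p) {c d : ℂ} (hc : c ≠ 0)
    (h : ∀ x, c * diseqTensor p x = d * diseqTensor q x) : c = d ∧ p = q := by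
  have hpq : p = q := by
    ext k
    by_contra hne
    obtain ⟨x, hx, hxk⟩ := hp.exists_forall_apply_ne_and_eq (Ne.symm hne)
    exact hc (by simpa [diseqTensor_eq_one hx, diseqTensor_eq_zero hxk] using h x)
  obtain ⟨x, hx⟩ := hp.exists_forall_apply_ne
  exact ⟨by simpa [← hpq, diseqTensor_eq_one hx] using h x, hpq⟩

end DiseqTensor

section Merge

variable {ι : Type*} [DecidableEq ι] {f : (ι → Bool) → ℂ} {i j k l : ι} {c d : ℂ} {p q : Perm ι}

/-- The merge of `f` at `i` and `j` is `c` times the tensor product of disequalities along `p`. It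
is stated on all variables: there `p` also pairs `i` with `j`, and only assignments that disagree
at `i` and `j` are tested. -/
structure MergesTo (f : (ι → Bool) → ℂ) (i j : ι) (c : ℂ) (p : Perm ι) : Prop where
  isPairing : IsPairing p
  apply_eq : p i = j
  add_comp_swap : ∀ x, x i ≠ x j → f x + f (x ∘ swap i j) = c * diseqTensor p x

lemma MergesTo.ne (h : MergesTo f i j c p) : i ≠ j :=
  h.apply_eq ▸ (h.isPairing.apply_ne i).symm

lemma MergesTo.apply_eq' (h : MergesTo f i j c p) : p j = i :=
  h.isPairing.involutive.eq_iff.mp h.apply_eq |>.symm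

lemma MergesTo.symm (h : MergesTo f i j c p) : MergesTo f j i c p :=
  ⟨h.isPairing, h.apply_eq', fun x hx => swap_comm i j ▸ h.add_comp_swap x hx.symm⟩

lemma merge_restrict {x : ι → Bool} (hx : x i ≠ x j) :
    merge f i j (fun k => x k) = f x + f (x ∘ swap i j) := by
  rw [merge, comp_swap_eq_update]
  cases hi : x i <;> cases hj : x j
  · simp_all
  · congr 2 <;> funext k <;> grind
  · rw [add_comm]
    congr 2 <;> funext k <;> grind
  · simp_all

lemma DTensor.exists_mergesTo [Fintype ι] (hij : i ≠ j) (h : DTensor (merge f i j)) :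
    ∃ c : ℝ, c ≠ 0 ∧ ∃ p, MergesTo f i j c p := by
  obtain ⟨c, hc, r, hr, hr', hf⟩ := h
  let p : Perm ι := swap i j * Perm.ofSubtype r
  have hpi : p i = j := by simp [p, Perm.ofSubtype_apply_of_not_mem]
  have hpj : p j = i := by simp [p, Perm.ofSubtype_apply_of_not_mem]
  have hp : ∀ k : {k // k ≠ i ∧ k ≠ j}, p k = r k := fun k => by
    simp [p, swap_apply_of_ne_of_ne (r k).2.1 (r k).2.2]
  have hcases : ∀ k, k = i ∨ k = j ∨ ∃ m : {k // k ≠ i ∧ k ≠ j}, m = k := fun k => by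
    by_cases hki : k = i <;> by_cases hkj : k = j <;> simp [hki, hkj]
  refine ⟨c, hc, p, ⟨⟨fun k => ?_, fun k => ?_⟩, hpi, fun x hx => ?_⟩⟩
  · rcases hcases k with rfl | rfl | ⟨m, rfl⟩ <;> simp [*]
  · rcases hcases k with rfl | rfl | ⟨m, rfl⟩
    · simpa [hpi] using hij.symm
    · simpa [hpj] using hij
    · simpa [hp, Subtype.coe_inj] using hr' m
  · have hiff : (∀ k : {k // k ≠ i ∧ k ≠ j}, x k ≠ x (r k)) ↔ ∀ k, x k ≠ x (p k) := by
      refine ⟨fun H k => ?_, fun H k => hp k ▸ H k⟩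
      rcases hcases k with rfl | rfl | ⟨m, rfl⟩
      · rwa [hpi]
      · rw [hpj]; exact hx.symm
      · rw [hp]; exact H m
    simp only [← merge_restrict hx, hf, diseqTensor, hiff, mul_ite, mul_one, mul_zero]

/-- Both sides evaluate the signature obtained from `f` by merging at `i, j` and at `k, l`. -/
lemma MergesTo.mul_add_comp_swap_eq (hp : MergesTo f i j c p) (hq : MergesTo f k l d q)
    (hik : i ≠ k) (hil : i ≠ l) (hjk : j ≠ k) (hjl : j ≠ l) {x : ι → Bool} (hxi : x i ≠ x j)
    (hxk : x k ≠ x l) :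
    c * (diseqTensor p x + diseqTensor p (x ∘ swap k l)) =
      d * (diseqTensor q x + diseqTensor q (x ∘ swap i j)) := by
  have hxi' : (x ∘ swap k l) i ≠ (x ∘ swap k l) j := by
    simpa [swap_apply_of_ne_of_ne, hik, hil, hjk, hjl] using hxi
  have hxk' : (x ∘ swap i j) k ≠ (x ∘ swap i j) l := by
    simpa [swap_apply_of_ne_of_ne, hik.symm, hil.symm, hjk.symm, hjl.symm] using hxk
  have hcomm : swap i j * swap k l = swap k l * swap i j :=
    (Perm.disjoint_swap_swap (by simp [*, hp.ne, hq.ne])).commute.eq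
  rw [mul_add, mul_add, ← hp.add_comp_swap x hxi, ← hp.add_comp_swap _ hxi',
    ← hq.add_comp_swap x hxk, ← hq.add_comp_swap _ hxk', Function.comp_assoc, Function.comp_assoc,
    ← Perm.coe_mul, ← Perm.coe_mul, hcomm]
  ring

lemma MergesTo.rematch_apply (h : MergesTo f i j c p) (hik : i ≠ k) (hil : i ≠ l) (hjk : j ≠ k)
    (hjl : j ≠ l) : rematch p k l i = j := by
  rw [← h.apply_eq] at hjk hjl ⊢
  exact rematch_apply_of_ne h.isPairing hik hil hjk hjl

lemma MergesTo.rematch_eq (hp : MergesTo f i j c p) (hq : MergesTo f k l d q) (hc : c ≠ 0)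
    (hik : i ≠ k) (hil : i ≠ l) (hjk : j ≠ k) (hjl : j ≠ l) :
    c * (if p k = l then 2 else 1) = d * (if q i = j then 2 else 1) ∧
      rematch p k l = rematch q i j := by
  refine (isPairing_rematch hp.isPairing k l).eq_and_eq_of_mul_diseqTensor_eq
    (by split_ifs <;> simpa) fun x => ?_
  by_cases hxi : x i = x j
  · rw [diseqTensor_eq_zero (hxi.trans (congrArg x (hp.rematch_apply hik hil hjk hjl).symm)),
      diseqTensor_eq_zero
        (hxi.trans (congrArg x (rematch_apply_left hq.isPairing hp.ne).symm)), mul_zero, mul_zero]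
  by_cases hxk : x k = x l
  · rw [diseqTensor_eq_zero
        (hxk.trans (congrArg x (rematch_apply_left hp.isPairing hq.ne).symm)),
      diseqTensor_eq_zero (hxk.trans (congrArg x
        (hq.rematch_apply hik.symm hjk.symm hil.symm hjl.symm).symm)), mul_zero, mul_zero]
  rw [mul_assoc, mul_assoc, ← hp.isPairing.diseqTensor_add_comp_swap hxk,
    ← hq.isPairing.diseqTensor_add_comp_swap hxi,
    hp.mul_add_comp_swap_eq hq hik hil hjk hjl hxi hxk]

lemma MergesTo.eq_of_norm_le {a : ι} (hp : MergesTo f i j c p) (hq : MergesTo f a (p a) d q)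
    (hc : c ≠ 0) (hdc : ‖d‖ ≤ ‖c‖) (hai : a ≠ i) (haj : a ≠ j) : d = c ∧ q = p := by
  have hpai : p a ≠ i := fun h => haj (hp.apply_eq ▸ (hp.isPairing.involutive.eq_iff.mp h))
  have hpaj : p a ≠ j := fun h => hai (p.injective (h.trans hp.apply_eq.symm))
  obtain ⟨hcoeff, hpair⟩ := hp.rematch_eq hq hc hai.symm hpai.symm haj.symm hpaj.symm
  rw [if_pos rfl] at hcoeff
  have hqi : q i = j := by
    by_contra hqi
    rw [if_neg hqi, mul_one] at hcoeff
    have : ‖c‖ * 2 = ‖d‖ := by simpa using congrArg norm hcoeff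
    linarith [norm_pos_iff.mpr hc]
  rw [if_pos hqi] at hcoeff
  rw [rematch_of_apply_eq rfl, rematch_of_apply_eq hqi] at hpair
  exact ⟨(mul_right_cancel₀ two_ne_zero hcoeff).symm, hpair.symm⟩

lemma exists_forall_mergesTo [Finite ι] [Nontrivial ι]
    (h : ∀ i j, i ≠ j → ∃ c : ℝ, c ≠ 0 ∧ ∃ p, MergesTo f i j c p) :
    ∃ c : ℝ, c ≠ 0 ∧ ∃ p, ∀ a, MergesTo f a (p a) c p := by
  choose! coeff hcoeff pairing hpairing using h
  obtain ⟨i₀, j₀, hij₀⟩ := exists_pair_ne ι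
  have : Nonempty {e : ι × ι // e.1 ≠ e.2} := ⟨⟨(i₀, j₀), hij₀⟩⟩
  obtain ⟨⟨⟨i, j⟩, hij⟩, hmax⟩ :=
    Finite.exists_max fun e : {e : ι × ι // e.1 ≠ e.2} => ‖(coeff e.1.1 e.1.2 : ℂ)‖
  have hp := hpairing i j hij
  refine ⟨coeff i j, hcoeff i j hij, pairing i j, fun a => ?_⟩
  rcases eq_or_ne a i with rfl | hai
  · rwa [hp.apply_eq]
  rcases eq_or_ne a j with rfl | haj
  · rw [hp.apply_eq']
    exact hp.symm
  have ha := (hp.isPairing.apply_ne a).symm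
  have hq := hpairing a _ ha
  obtain ⟨hd, hqp⟩ := hp.eq_of_norm_le hq (by exact_mod_cast hcoeff i j hij)
    (hmax ⟨(a, _), ha⟩) hai haj
  rwa [hd, hqp] at hq

end Merge

section Determined

variable {ι : Type*} [DecidableEq ι] {f : (ι → Bool) → ℂ} {a b : ι} {c d : ℂ} {p q : Perm ι}

lemma MergesTo.rematch_eq_of_notMem (hc : c ≠ 0) (hp : ∀ a, MergesTo f a (p a) c p)
    (hq : MergesTo f a b d q) (hpab : p a ≠ b) {e : ι} (he : e ∉ ({a, b, p a, p b} : Finset ι)) :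
    c = d * (if q e = p e then 2 else 1) ∧ rematch p a b = rematch q e (p e) := by
  simp only [Finset.mem_insert, Finset.mem_singleton, not_or,
    ← (hp a).isPairing.involutive.eq_iff] at he
  simpa only [if_neg hpab, mul_one] using
    (hp e).rematch_eq hq hc he.1 he.2.1 he.2.2.1 he.2.2.2

lemma MergesTo.eq_of_apply_ne [Fintype ι] (hcard : 8 < Fintype.card ι) (hc : c ≠ 0)
    (hp : ∀ a, MergesTo f a (p a) c p) (hq : MergesTo f a b d q) (hpab : p a ≠ b) :
    d = c / 2 ∧ q = rematch p a b := by
  have hpinv := (hp a).isPairing.involutive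
  have hqinv := hq.isPairing.involutive
  have hroom : ∀ S : Finset ι, S.card ≤ 8 → ∃ e, e ∉ S := fun S hS =>
    let ⟨e, _, he⟩ := Finset.exists_mem_notMem_of_card_lt_card (hS.trans_lt hcard)
    ⟨e, he⟩
  obtain ⟨e, he, hqe⟩ : ∃ e ∉ ({a, b, p a, p b} : Finset ι), q e = p e := by
    obtain ⟨u, hu⟩ := hroom {a, b, p a, p b} (Finset.card_le_four.trans (by lia))
    obtain ⟨e, he⟩ := hroom ({a, b, p a, p b} ∪ {u, p u, q u, q (p u)})
      ((Finset.card_union_le _ _).trans (Nat.add_le_add Finset.card_le_four Finset.card_le_four))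
    rw [Finset.mem_union, not_or] at he
    refine ⟨e, he.1, ?_⟩
    have hsame : rematch p a b e = rematch q u (p u) e :=
      congrArg (· e) (hq.rematch_eq_of_notMem hc hp hpab hu).2
    simp only [Finset.mem_insert, Finset.mem_singleton, not_or] at he
    obtain ⟨⟨hea, heb, hepa, hepb⟩, heu, hepu, hequ, heqpu⟩ := he
    rwa [rematch_apply_of_ne (hp a).isPairing hea heb (mt hpinv.eq_iff.mp hepa)
        (mt hpinv.eq_iff.mp hepb),
      rematch_apply_of_ne hq.isPairing heu hepu (mt hqinv.eq_iff.mp hequ)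
        (mt hqinv.eq_iff.mp heqpu), eq_comm] at hsame
  obtain ⟨hcoeff, hpair⟩ := hq.rematch_eq_of_notMem hc hp hpab he
  rw [if_pos hqe] at hcoeff
  rw [rematch_of_apply_eq hqe] at hpair
  exact ⟨by rw [hcoeff, mul_div_cancel_right₀ _ two_ne_zero], hpair.symm⟩

lemma MergesTo.add_comp_swap_eq [Fintype ι] (hcard : 8 < Fintype.card ι) (hc : c ≠ 0)
    (hp : ∀ a, MergesTo f a (p a) c p) (hq : MergesTo f a b d q) {x : ι → Bool} (hx : x a ≠ x b) :
    f x + f (x ∘ swap a b) = c / 2 * diseqTensor p x + c / 2 * diseqTensor p (x ∘ swap a b) := by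
  rw [← mul_add, (hp a).isPairing.diseqTensor_add_comp_swap hx]
  split_ifs with hpab
  · subst hpab
    rw [rematch_of_apply_eq rfl, (hp a).add_comp_swap x hx]
    ring
  · obtain ⟨rfl, rfl⟩ := hq.eq_of_apply_ne hcard hc hp hpab
    rw [one_mul, hq.add_comp_swap x hx]

end Determined

theorem eo_dTensor_of_merges_general {ι : Type*} [Fintype ι] [DecidableEq ι]
    (hcard : 8 < Fintype.card ι) (f : (ι → Bool) → ℂ) (hconst : ∀ b, f (fun _ => b) = 0)
    (hmerge : ∀ i j, i ≠ j → DTensor (merge f i j)) : DTensor f := by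
  have hmergesTo : ∀ i j, i ≠ j → ∃ c : ℝ, c ≠ 0 ∧ ∃ p, MergesTo f i j c p :=
    fun i j hij => (hmerge i j hij).exists_mergesTo hij
  have : Nontrivial ι := Fintype.one_lt_card_iff_nontrivial.mp (by lia)
  obtain ⟨c, hc, p, hp⟩ := exists_forall_mergesTo hmergesTo
  have hsub : (fun x => f x - c / 2 * diseqTensor p x) = 0 := by
    refine eq_zero_of_comp_swap_eq_neg (by lia) (fun b => ?_) fun a b x hx => ?_
    · rw [hconst, diseqTensor_eq_zero (k := Classical.arbitrary ι) rfl, mul_zero, sub_zero]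
    · obtain ⟨_, -, _, hq⟩ := hmergesTo a b (ne_of_apply_ne x hx)
      linear_combination hq.add_comp_swap_eq hcard (by exact_mod_cast hc) hp hx
  have hf : ∀ x, f x = c / 2 * diseqTensor p x := fun x => sub_eq_zero.mp (congrFun hsub x)
  have hpair := (hp (Classical.arbitrary ι)).isPairing
  refine ⟨c / 2, div_ne_zero hc two_ne_zero, p, hpair.involutive, hpair.apply_ne, fun x => ?_⟩
  rw [hf x, diseqTensor, mul_ite, mul_one, mul_zero]
  push_cast
  congr

/-- Let `f` be an EO signature of arity `2n ≥ 10` satisfying ARS.  If all merges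
`∂_{ij} f` lie in `D^⊗`, then `f` lies in `D^⊗`. -/
theorem eo_dTensor_of_merges (n : ℕ) (hn : 5 ≤ n)
    (f : (Fin (2 * n) → Bool) → ℂ)
    (hEO : ∀ x : Fin (2 * n) → Bool, f x ≠ 0 → hw x = n)
    (hars : ARS f)
    (hmerge : ∀ i j : Fin (2 * n), i ≠ j → DTensor (merge f i j)) :
    DTensor f := by
  refine eo_dTensor_of_merges_general (by simp; lia) f (fun b => ?_) hmerge
  by_contra hb
  have hweight := hEO _ hb
  cases b <;> simp [hw_const] at hweight <;> lia

end Stmt18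
end
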